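/- arXiv:1101.3572 — 7 statements merged into one kernel-verified Lean document; each statement's English description precedes it below -/
import Mathlib

section
/- Let c*(t,w) be a consumption function for t ≥ 0, w ≥ 0 with c*(t,0) = 0 and c*(t,·) locally Lipschitz continuous and strictly increasing in w, and let w(t,x) be the unique solution of ∂_t w(t,x) = −c*(t,w(t,x)), w(0,x) = x. Assume ∫_0^∞ c*(t,w(t,x)) dt = x for every x ≥ 0 and that the partial derivative ∂_x c*(t,w(t,x)) exists and is strictly positive. Then there exists a function u(t,c), defined for t ≥ 0 and c ≥ 0, with ∂_c u(t,c) ≥ 0 and ∂²_c u(t,c) ≤ 0, such that for every x ≥ 0 the problem of maximizing ∫_0^∞ u(t,C_t) dt over measurable consumption paths C : [0,∞) → [0,∞) with ∫_0^∞ C_t dt ≤ x is solved by C_t = c*(t,w(t,x)), and this solution is unique up to equality for almost every t. -/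
open MeasureTheory Set

/-!
Write `φ t y = cstar t (w t y)`. For each `t ≥ 0` this is continuous and strictly increasing in
`y ≥ 0` and vanishes at `y = 0`. The utility is

  `u t c = exp (-t) + c + ∫ y in (0, ∞), exp (-y) * min c (φ t y)`,

a superposition of the concave functions `min c (φ t y)`, whose marginal utility is
`∂_c u t c = 1 + ∫ y in {φ t y > c}, exp (-y)`. At `c = φ t x` this equals `1 + exp (-x)`, which
does not depend on `t`: it is the Lagrange multiplier of the budget constraint. Concavity gives
the supergradient inequality `u t c - u t (φ t x) ≤ (1 + exp (-x)) * (c - φ t x)`, strict unless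
`c = φ t x` (`util_sub_le`, `eq_of_util_sub_eq`). Integrating in `t` and using the budget
constraint yields optimality and uniqueness.

Bochner integrals of non-integrable functions are `0`, so a non-integrable `C` counts as
admissible. The two extra terms of `u` take care of this: `u t c ≥ c` makes the
utility of such a path non-integrable, hence of value `0`, while `exp (-t)` makes the value of the
optimal path strictly positive.

`cstar` is not assumed measurable in `t`, but `φ · y` is minus the time derivative of `w · y`, so
it is measurable on `[0, ∞)`; with continuity in `y` this gives joint measurability.
-/

/-- The utility of consuming `c`, up to an additive constant, when `φ y` is the consumption that is
optimal for initial wealth `y`. It is defined for all real `c`, so that the two-sided derivative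
at `c = 0` makes sense. -/
noncomputable def util (φ : ℝ → ℝ) (c : ℝ) : ℝ :=
  c + ∫ y in Ioi (0:ℝ), Real.exp (-y) * min c (φ y)

lemma integrableOn_kernel {φ : ℝ → ℝ} (hφ : Continuous φ) (h0 : ∀ y, 0 ≤ φ y) (c : ℝ) :
    IntegrableOn (fun y => Real.exp (-y) * min c (φ y)) (Ioi 0) := by
  refine Integrable.mono' ((integrableOn_exp_neg_Ioi 0).mul_const |c|) ?_ ?_
  · exact Continuous.aestronglyMeasurable (by fun_prop)
  · refine Filter.Eventually.of_forall fun y => ?_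
    rw [Real.norm_eq_abs, abs_mul, abs_of_pos (Real.exp_pos _)]
    refine mul_le_mul_of_nonneg_left ?_ (Real.exp_pos _).le
    rcases le_total c (φ y) with h | h
    · rw [min_eq_left h]
    · rw [min_eq_right h, abs_of_nonneg (h0 y)]
      exact h.trans (le_abs_self c)

lemma integrableOn_marginal {φ : ℝ → ℝ} (hφ : Continuous φ) (c : ℝ) :
    IntegrableOn (fun y => if c < φ y then Real.exp (-y) else 0) (Ioi 0) := by
  have hm : MeasurableSet {y | c < φ y} := measurableSet_lt measurable_const hφ.measurable
  exact Integrable.indicator (integrableOn_exp_neg_Ioi 0) hm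

lemma hasDerivAt_util {φ : ℝ → ℝ} (hφ : Continuous φ) (h0 : ∀ y, 0 ≤ φ y)
    (hmono : StrictMonoOn φ (Ici 0)) (c : ℝ) :
    HasDerivAt (util φ)
      (1 + ∫ y in Ioi (0:ℝ), if c < φ y then Real.exp (-y) else 0) c := by
  refine (hasDerivAt_id c).add ?_
  refine (hasDerivAt_integral_of_dominated_loc_of_lip
    (bound := fun y => Real.exp (-y)) (s := univ) Filter.univ_mem
    (Filter.Eventually.of_forall fun c => (integrableOn_kernel hφ h0 c).1)
    (integrableOn_kernel hφ h0 c) (integrableOn_marginal hφ c).1 ?_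
    (integrableOn_exp_neg_Ioi 0) ?_).2
  · refine Filter.Eventually.of_forall fun y => ?_
    refine LipschitzOnWith.of_dist_le_mul fun a _ b _ => ?_
    rw [Real.dist_eq, Real.dist_eq, ← mul_sub, abs_mul]
    simp only [Real.coe_nnabs]
    refine mul_le_mul_of_nonneg_left ?_ (abs_nonneg _)
    simpa using abs_min_sub_min_le_max a (φ y) b (φ y)
  · -- `min · (φ y)` has a kink at `c` only when `φ y = c`, which holds for at most one `y > 0`.
    have hsub : ({y | 0 < y ∧ φ y = c} : Set ℝ).Subsingleton := fun a ha b hb =>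
      hmono.injOn (mem_Ici.2 ha.1.le) (mem_Ici.2 hb.1.le) (ha.2.trans hb.2.symm)
    have hnull : ∀ᵐ y : ℝ, y ∉ ({y | 0 < y ∧ φ y = c} : Set ℝ) :=
      measure_eq_zero_iff_ae_notMem.1 (hsub.measure_zero volume)
    rw [ae_restrict_iff' measurableSet_Ioi]
    filter_upwards [hnull] with y hy hy0
    rcases lt_trichotomy c (φ y) with h | h | h
    · rw [if_pos h]
      have : HasDerivAt (fun x => Real.exp (-y) * x) (Real.exp (-y)) c := by
        simpa using (hasDerivAt_id c).const_mul (Real.exp (-y))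
      refine this.congr_of_eventuallyEq ?_
      filter_upwards [Iio_mem_nhds h] with a ha
      rw [min_eq_left (le_of_lt ha)]
    · exact absurd ⟨hy0, h.symm⟩ hy
    · rw [if_neg h.not_gt]
      refine (hasDerivAt_const c (Real.exp (-y) * φ y)).congr_of_eventuallyEq ?_
      filter_upwards [Ioi_mem_nhds h] with a ha
      rw [min_eq_right (le_of_lt ha)]

lemma deriv_util_nonneg {φ : ℝ → ℝ} (hφ : Continuous φ) (h0 : ∀ y, 0 ≤ φ y)
    (hmono : StrictMonoOn φ (Ici 0)) (c : ℝ) : 0 ≤ deriv (util φ) c := by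
  rw [(hasDerivAt_util hφ h0 hmono c).deriv]
  have : 0 ≤ ∫ y in Ioi (0:ℝ), if c < φ y then Real.exp (-y) else 0 :=
    integral_nonneg fun y => by
      dsimp only
      split_ifs
      exacts [(Real.exp_pos _).le, le_rfl]
  linarith

lemma antitone_deriv_util {φ : ℝ → ℝ} (hφ : Continuous φ) (h0 : ∀ y, 0 ≤ φ y)
    (hmono : StrictMonoOn φ (Ici 0)) : Antitone (deriv (util φ)) := by
  intro a b hab
  rw [(hasDerivAt_util hφ h0 hmono a).deriv, (hasDerivAt_util hφ h0 hmono b).deriv]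
  gcongr 1 + ?_
  refine integral_mono (integrableOn_marginal hφ b) (integrableOn_marginal hφ a) fun y => ?_
  dsimp only
  split_ifs with h1 h2
  · exact le_rfl
  · exact absurd (hab.trans_lt h1) h2
  · exact (Real.exp_pos _).le
  · exact le_rfl

/-- The integrand of the gap in the supergradient inequality at `φ x`. -/
noncomputable def gap (φ : ℝ → ℝ) (x c y : ℝ) : ℝ :=
  (Ioi x).indicator (fun y => Real.exp (-y) * (c - φ x)) y
    - (Real.exp (-y) * min c (φ y) - Real.exp (-y) * min (φ x) (φ y))

lemma gap_nonneg {φ : ℝ → ℝ} (hmono : StrictMonoOn φ (Ici 0)) {x : ℝ} (hx : 0 ≤ x) (c : ℝ)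
    {y : ℝ} (hy : 0 < y) : 0 ≤ gap φ x c y := by
  have he := (Real.exp_pos (-y)).le
  unfold gap
  by_cases h : x < y
  · rw [indicator_of_mem (mem_Ioi.2 h), min_eq_left (hmono hx hy.le h).le]
    nlinarith [min_le_left c (φ y)]
  · rw [indicator_of_notMem (by simpa using h),
      min_eq_right (hmono.monotoneOn hy.le hx (not_lt.1 h))]
    nlinarith [min_le_right c (φ y)]

lemma integrableOn_gap {φ : ℝ → ℝ} (hφ : Continuous φ) (h0 : ∀ y, 0 ≤ φ y) (x c : ℝ) :
    IntegrableOn (gap φ x c) (Ioi 0) := by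
  refine Integrable.sub ?_ ((integrableOn_kernel hφ h0 c).sub (integrableOn_kernel hφ h0 (φ x)))
  exact Integrable.indicator ((integrableOn_exp_neg_Ioi 0).mul_const _) measurableSet_Ioi

lemma integral_gap {φ : ℝ → ℝ} (hφ : Continuous φ) (h0 : ∀ y, 0 ≤ φ y) {x : ℝ} (hx : 0 ≤ x)
    (c : ℝ) : ∫ y in Ioi (0:ℝ), gap φ x c y =
      (1 + Real.exp (-x)) * (c - φ x) - (util φ c - util φ (φ x)) := by
  have hi : IntegrableOn ((Ioi x).indicator (fun y => Real.exp (-y) * (c - φ x))) (Ioi 0) :=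
    Integrable.indicator ((integrableOn_exp_neg_Ioi 0).mul_const _) measurableSet_Ioi
  have h1 := integrableOn_kernel hφ h0 c
  have h2 := integrableOn_kernel hφ h0 (φ x)
  have h12 : IntegrableOn (fun y => Real.exp (-y) * min c (φ y)
      - Real.exp (-y) * min (φ x) (φ y)) (Ioi 0) := h1.sub h2
  unfold gap util
  rw [integral_sub hi h12, integral_sub h1 h2, setIntegral_indicator measurableSet_Ioi,
    inter_eq_self_of_subset_right (Ioi_subset_Ioi hx), integral_mul_const, integral_exp_neg_Ioi]
  ring

/-- Supergradient inequality at `φ x`, with slope independent of `φ`. -/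
lemma util_sub_le {φ : ℝ → ℝ} (hφ : Continuous φ) (h0 : ∀ y, 0 ≤ φ y)
    (hmono : StrictMonoOn φ (Ici 0)) {x : ℝ} (hx : 0 ≤ x) (c : ℝ) :
    util φ c - util φ (φ x) ≤ (1 + Real.exp (-x)) * (c - φ x) := by
  have h := integral_gap hφ h0 hx c
  have : 0 ≤ ∫ y in Ioi (0:ℝ), gap φ x c y :=
    setIntegral_nonneg measurableSet_Ioi fun y hy => gap_nonneg hmono hx c hy
  linarith

/-- The supergradient inequality is an equality only at `φ x`: otherwise the gap is positive for
all `y` close to `x` on one side. -/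
lemma eq_of_util_sub_eq {φ : ℝ → ℝ} (hφ : Continuous φ) (h0 : ∀ y, 0 ≤ φ y) (hz : φ 0 = 0)
    (hmono : StrictMonoOn φ (Ici 0)) {x : ℝ} (hx : 0 ≤ x) {c : ℝ} (hc : 0 ≤ c)
    (h : util φ c - util φ (φ x) = (1 + Real.exp (-x)) * (c - φ x)) : c = φ x := by
  by_contra hne
  have hint := integral_gap hφ h0 hx c
  rw [h, sub_self, setIntegral_eq_zero_iff_of_nonneg_ae _ (integrableOn_gap hφ h0 x c),
    Filter.EventuallyEq, ae_restrict_iff' measurableSet_Ioi] at hint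
  swap
  · rw [Filter.EventuallyLE, ae_restrict_iff' measurableSet_Ioi]
    exact Filter.Eventually.of_forall fun y hy => gap_nonneg hmono hx c hy
  -- An interval of positive length in `(0, ∞)` must meet the conull set where the gap vanishes.
  have meet : ∀ a b : ℝ, 0 ≤ a → a < b → ∃ y, a < y ∧ y < b ∧ gap φ x c y = 0 := by
    intro a b ha hab
    have hpos : volume (Ioo a b) ≠ 0 := by simp [hab]
    obtain ⟨y, hy, hy'⟩ := (frequently_ae_mem_iff.2 hpos).and_eventually hint |>.exists
    exact ⟨y, hy.1, hy.2, hy' (ha.trans_lt hy.1)⟩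
  rcases lt_or_gt_of_ne hne with hlt | hgt
  · have hx0 : 0 < x := by
      rcases hx.eq_or_lt with h | h
      · rw [← h, hz] at hlt
        exact absurd hlt hc.not_gt
      · exact h
    obtain ⟨a, ha, hax⟩ := exists_Ioc_subset_of_mem_nhds
      (hφ.continuousAt.preimage_mem_nhds (Ioi_mem_nhds hlt)) ⟨0, hx0⟩
    obtain ⟨y, hy1, hy2, hy⟩ := meet (max a 0) x (le_max_right _ _) (max_lt ha hx0)
    have hy0 : 0 < y := (le_max_right _ _).trans_lt hy1
    have hcy : c < φ y := hax ⟨(le_max_left _ _).trans_lt hy1, hy2.le⟩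
    unfold gap at hy
    rw [indicator_of_notMem (by simpa using hy2.le), min_eq_left hcy.le,
      min_eq_right (hmono hy0.le hx hy2).le] at hy
    nlinarith [Real.exp_pos (-y)]
  · obtain ⟨b, hb, hbx⟩ := exists_Ico_subset_of_mem_nhds
      (hφ.continuousAt.preimage_mem_nhds (Iio_mem_nhds hgt)) ⟨x + 1, by linarith⟩
    obtain ⟨y, hy1, hy2, hy⟩ := meet x b hx hb
    have hcy : φ y < c := hbx ⟨hy1.le, hy2⟩
    unfold gap at hy
    rw [indicator_of_mem (mem_Ioi.2 hy1), min_eq_right hcy.le,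
      min_eq_left (hmono hx (hx.trans hy1.le) hy1).le] at hy
    nlinarith [Real.exp_pos (-y)]

lemma le_util {φ : ℝ → ℝ} (h0 : ∀ y, 0 ≤ φ y) {c : ℝ} (hc : 0 ≤ c) : c ≤ util φ c := by
  have : 0 ≤ ∫ y in Ioi (0:ℝ), Real.exp (-y) * min c (φ y) :=
    integral_nonneg fun y => mul_nonneg (Real.exp_pos _).le (le_min hc (h0 y))
  unfold util
  linarith

lemma util_le {φ : ℝ → ℝ} (hφ : Continuous φ) (h0 : ∀ y, 0 ≤ φ y) (c : ℝ) :
    util φ c ≤ 2 * c := by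
  have : ∫ y in Ioi (0:ℝ), Real.exp (-y) * min c (φ y) ≤ ∫ y in Ioi (0:ℝ), Real.exp (-y) * c :=
    integral_mono (integrableOn_kernel hφ h0 c) ((integrableOn_exp_neg_Ioi 0).mul_const c)
      fun y => mul_le_mul_of_nonneg_left (min_le_left _ _) (Real.exp_pos _).le
  rw [integral_mul_const, integral_exp_neg_Ioi_zero] at this
  unfold util
  linarith

/-- Optimality for a family `Φ t` of strictly increasing consumption profiles, in the measurable
setting. -/
lemma optimal {Φ : ℝ → ℝ → ℝ} (hcont : ∀ t ≥ (0:ℝ), Continuous (Φ t))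
    (hnn : ∀ t y, 0 ≤ Φ t y) (hz : ∀ t ≥ (0:ℝ), Φ t 0 = 0)
    (hmono : ∀ t ≥ (0:ℝ), StrictMonoOn (Φ t) (Ici 0))
    (hmeas : StronglyMeasurable (Function.uncurry Φ)) {x : ℝ} (hx : 0 ≤ x)
    (hint : IntegrableOn (fun t => Φ t x) (Ioi 0)) (hbudget : ∫ t in Ioi (0:ℝ), Φ t x = x)
    {C : ℝ → ℝ} (hC : Measurable C) (hC0 : ∀ t, 0 ≤ C t)
    (hCx : ∫ t in Ioi (0:ℝ), C t ≤ x) :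
    ((∫ t in Ioi (0:ℝ), (Real.exp (-t) + util (Φ t) (C t)))
        ≤ ∫ t in Ioi (0:ℝ), (Real.exp (-t) + util (Φ t) (Φ t x))) ∧
      ((∫ t in Ioi (0:ℝ), (Real.exp (-t) + util (Φ t) (C t)))
          = (∫ t in Ioi (0:ℝ), (Real.exp (-t) + util (Φ t) (Φ t x))) →
        ∀ᵐ t ∂(volume.restrict (Ioi (0:ℝ))), C t = Φ t x) := by
  have hexp := integrableOn_exp_neg_Ioi 0
  have hΦx : StronglyMeasurable fun t => Φ t x :=
    hmeas.comp_measurable (measurable_id.prodMk measurable_const)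
  have hUmeas : StronglyMeasurable fun t => util (Φ t) (Φ t x) := by
    refine hΦx.add (StronglyMeasurable.integral_prod_right (ν := volume.restrict (Ioi (0:ℝ)))
      (f := fun t y => Real.exp (-y) * min (Φ t x) (Φ t y)) ?_)
    refine Measurable.stronglyMeasurable ?_
    have h1 : Measurable fun p : ℝ × ℝ => Φ p.1 p.2 := hmeas.measurable
    have h2 : Measurable fun p : ℝ × ℝ => Φ p.1 x := hΦx.measurable.comp measurable_fst
    exact (Real.measurable_exp.comp measurable_snd.neg).mul (h2.min h1)
  have hUint : IntegrableOn (fun t => util (Φ t) (Φ t x)) (Ioi 0) := by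
    refine Integrable.mono' (hint.const_mul 2) hUmeas.aestronglyMeasurable ?_
    rw [ae_restrict_iff' measurableSet_Ioi]
    refine Filter.Eventually.of_forall fun t ht => ?_
    rw [Real.norm_eq_abs, abs_of_nonneg ((hnn t x).trans (le_util (hnn t) (hnn t x)))]
    exact util_le (hcont t (le_of_lt ht)) (hnn t) _
  have hpos : 0 < ∫ t in Ioi (0:ℝ), (Real.exp (-t) + util (Φ t) (Φ t x)) := by
    rw [integral_add hexp hUint, integral_exp_neg_Ioi_zero]
    have : 0 ≤ ∫ t in Ioi (0:ℝ), util (Φ t) (Φ t x) :=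
      integral_nonneg fun t => (hnn t x).trans (le_util (hnn t) (hnn t x))
    linarith
  by_cases hUC : IntegrableOn (fun t => Real.exp (-t) + util (Φ t) (C t)) (Ioi 0)
  swap
  · rw [integral_undef hUC]
    exact ⟨hpos.le, fun h => absurd h hpos.ne⟩
  have hCint : IntegrableOn C (Ioi 0) := by
    refine Integrable.mono' hUC hC.aestronglyMeasurable (Filter.Eventually.of_forall fun t => ?_)
    rw [Real.norm_eq_abs, abs_of_nonneg (hC0 t)]
    linarith [le_util (hnn t) (hC0 t), Real.exp_pos (-t)]
  have hopt : IntegrableOn (fun t => Real.exp (-t) + util (Φ t) (Φ t x)) (Ioi 0) := hexp.add hUint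
  set d : ℝ → ℝ := fun t => (1 + Real.exp (-x)) * (C t - Φ t x) -
    ((Real.exp (-t) + util (Φ t) (C t)) - (Real.exp (-t) + util (Φ t) (Φ t x))) with hd
  have hlin : IntegrableOn (fun t => (1 + Real.exp (-x)) * (C t - Φ t x)) (Ioi 0) :=
    (hCint.sub hint).const_mul _
  have hdint : IntegrableOn d (Ioi 0) := hlin.sub (hUC.sub hopt)
  have hdiff : IntegrableOn (fun t => (Real.exp (-t) + util (Φ t) (C t)) -
      (Real.exp (-t) + util (Φ t) (Φ t x))) (Ioi 0) := hUC.sub hopt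
  have hdval : ∫ t in Ioi (0:ℝ), d t = (1 + Real.exp (-x)) * ((∫ t in Ioi (0:ℝ), C t) - x) -
      ((∫ t in Ioi (0:ℝ), (Real.exp (-t) + util (Φ t) (C t)))
        - ∫ t in Ioi (0:ℝ), (Real.exp (-t) + util (Φ t) (Φ t x))) := by
    simp only [hd]
    rw [integral_sub hlin hdiff, integral_sub hUC hopt, integral_const_mul,
      integral_sub hCint hint, hbudget]
  have hd0 : 0 ≤ᵐ[volume.restrict (Ioi (0:ℝ))] d := by
    rw [Filter.EventuallyLE, ae_restrict_iff' measurableSet_Ioi]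
    refine Filter.Eventually.of_forall fun t ht => ?_
    have := util_sub_le (hcont t (le_of_lt ht)) (hnn t) (hmono t (le_of_lt ht)) hx (C t)
    simp only [hd, Pi.zero_apply]
    linarith
  have hdnn : 0 ≤ ∫ t in Ioi (0:ℝ), d t := integral_nonneg_of_ae hd0
  have hslack : (1 + Real.exp (-x)) * ((∫ t in Ioi (0:ℝ), C t) - x) ≤ 0 :=
    mul_nonpos_of_nonneg_of_nonpos (by positivity) (by linarith)
  refine ⟨by linarith, fun heq => ?_⟩
  have hdz := (setIntegral_eq_zero_iff_of_nonneg_ae hd0 hdint).1 (by linarith)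
  filter_upwards [hdz, ae_restrict_mem measurableSet_Ioi] with t ht ht0
  refine eq_of_util_sub_eq (hcont t (le_of_lt ht0)) (hnn t) (hz t (le_of_lt ht0))
    (hmono t (le_of_lt ht0)) hx (hC0 t) ?_
  simp only [hd, Pi.zero_apply] at ht
  linarith

theorem stmt_0
    (cstar : ℝ → ℝ → ℝ) (w : ℝ → ℝ → ℝ) (dc : ℝ → ℝ → ℝ)
    (hc0 : ∀ t ≥ (0:ℝ), cstar t 0 = 0)
    (hclip : ∀ t ≥ (0:ℝ), LocallyLipschitz (cstar t))
    (hcmono : ∀ t ≥ (0:ℝ), StrictMonoOn (cstar t) (Ici 0))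
    (hw0 : ∀ x ≥ (0:ℝ), w 0 x = x)
    (hwode : ∀ x ≥ (0:ℝ), ∀ t ≥ (0:ℝ),
      HasDerivAt (fun s => w s x) (-(cstar t (w t x))) t)
    (hwuniq : ∀ x ≥ (0:ℝ), ∀ v : ℝ → ℝ, v 0 = x →
      (∀ t ≥ (0:ℝ), HasDerivAt v (-(cstar t (v t))) t) → ∀ t ≥ (0:ℝ), v t = w t x)
    (hbudget : ∀ x ≥ (0:ℝ), (∫ t in Ioi (0:ℝ), cstar t (w t x)) = x)
    (hdc : ∀ t ≥ (0:ℝ), ∀ x ≥ (0:ℝ), HasDerivAt (fun y => cstar t (w t y)) (dc t x) x)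
    (hdcpos : ∀ t ≥ (0:ℝ), ∀ x ≥ (0:ℝ), 0 < dc t x) :
    ∃ u : ℝ → ℝ → ℝ,
      (∀ t ≥ (0:ℝ), ∀ c ≥ (0:ℝ), 0 ≤ deriv (u t) c ∧ deriv (deriv (u t)) c ≤ 0) ∧
      ∀ x ≥ (0:ℝ), ∀ C : ℝ → ℝ, Measurable C → (∀ t, 0 ≤ C t) →
        (∫ t in Ioi (0:ℝ), C t) ≤ x →
        ((∫ t in Ioi (0:ℝ), u t (C t)) ≤ ∫ t in Ioi (0:ℝ), u t (cstar t (w t x))) ∧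
        ((∫ t in Ioi (0:ℝ), u t (C t)) = (∫ t in Ioi (0:ℝ), u t (cstar t (w t x))) →
          ∀ᵐ t ∂(volume.restrict (Ioi (0:ℝ))), C t = cstar t (w t x)) := by
  -- The hypotheses say nothing about negative `t` or `y`, hence the two truncations.
  set Φ : ℝ → ℝ → ℝ := fun t y => if 0 ≤ t then cstar t (w t (max y 0)) else 0 with hΦ
  have hΦeq : ∀ t ≥ (0:ℝ), ∀ y ≥ (0:ℝ), Φ t y = cstar t (w t y) := fun t ht y hy => by
    simp only [hΦ, if_pos ht, max_eq_left hy]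
  have hcOn : ∀ t ≥ (0:ℝ), ContinuousOn (fun y => cstar t (w t y)) (Ici 0) :=
    fun t ht y hy => (hdc t ht y hy).continuousAt.continuousWithinAt
  have hcont' : ∀ t, Continuous (Φ t) := fun t => by
    by_cases ht : 0 ≤ t
    · simp only [hΦ, if_pos ht]
      exact (hcOn t ht).comp_continuous (continuous_id.max continuous_const)
        fun y => mem_Ici.2 (le_max_right _ _)
    · simp only [hΦ, if_neg ht]
      exact continuous_const
  have hmono : ∀ t ≥ (0:ℝ), StrictMonoOn (Φ t) (Ici 0) := fun t ht => by
    have h : StrictMonoOn (fun y => cstar t (w t y)) (Ici 0) :=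
      strictMonoOn_of_deriv_pos (convex_Ici 0) (hcOn t ht) fun y hy => by
        have hy0 : 0 ≤ y := interior_subset hy
        rw [(hdc t ht y hy0).deriv]
        exact hdcpos t ht y hy0
    exact h.congr fun y hy => (hΦeq t ht y hy).symm
  have hz : ∀ t ≥ (0:ℝ), Φ t 0 = 0 := fun t ht => by
    have hw : (0:ℝ) = w t 0 := hwuniq 0 le_rfl (fun _ => 0) rfl
      (fun s hs => by simpa [hc0 s hs] using hasDerivAt_const s (0:ℝ)) t ht
    rw [hΦeq t ht 0 le_rfl, ← hw, hc0 t ht]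
  have hnn : ∀ t y, 0 ≤ Φ t y := fun t y => by
    by_cases ht : 0 ≤ t
    · have h1 : Φ t y = Φ t (max y 0) := by simp [hΦ]
      have h2 : Φ t 0 ≤ Φ t (max y 0) :=
        (hmono t ht).monotoneOn self_mem_Ici (mem_Ici.2 (le_max_right y 0)) (le_max_right y 0)
      rw [h1]
      exact (hz t ht).ge.trans h2
    · simp [hΦ, ht]
  have hmeas : StronglyMeasurable (Function.uncurry Φ) := by
    have h : StronglyMeasurable (Function.uncurry fun y t => Φ t y) := by
      refine stronglyMeasurable_uncurry_of_continuous_of_stronglyMeasurable hcont' fun y => ?_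
      have : (fun t => Φ t y) =
          (Ici (0:ℝ)).indicator (fun t => -deriv (fun s => w s (max y 0)) t) := by
        ext t
        by_cases ht : 0 ≤ t
        · rw [indicator_of_mem (mem_Ici.2 ht), (hwode _ (le_max_right y 0) t ht).deriv]
          simp [hΦ, ht]
        · rw [indicator_of_notMem (by simpa using ht)]
          simp [hΦ, ht]
      rw [this]
      exact ((stronglyMeasurable_deriv _).neg).indicator measurableSet_Ici
    exact h.comp_measurable measurable_swap
  have hcongr : ∀ x ≥ (0:ℝ), ∀ t ∈ Ioi (0:ℝ), Φ t x = cstar t (w t x) :=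
    fun x hx t ht => hΦeq t (le_of_lt ht) x hx
  refine ⟨fun t c => Real.exp (-t) + util (Φ t) c, fun t ht c _ => ?_, fun x hx C hC hC0 hCx => ?_⟩
  · have hderiv : deriv (fun c => Real.exp (-t) + util (Φ t) c) = deriv (util (Φ t)) := by
      ext a
      exact deriv_const_add _
    rw [hderiv]
    exact ⟨deriv_util_nonneg (hcont' t) (hnn t) (hmono t ht) c,
      (antitone_deriv_util (hcont' t) (hnn t) (hmono t ht)).deriv_nonpos⟩
  · have hbud : ∫ t in Ioi (0:ℝ), Φ t x = x :=
      (setIntegral_congr_fun measurableSet_Ioi (hcongr x hx)).trans (hbudget x hx)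
    have hint : IntegrableOn (fun t => Φ t x) (Ioi 0) := by
      rcases hx.lt_or_eq with hx0 | hx0
      · -- A non-integrable function would have integral `0`, not `x`.
        by_contra hn
        rw [integral_undef hn] at hbud
        exact hx0.ne hbud
      · rw [← hx0]
        exact integrableOn_zero.congr_fun (fun t ht => (hz t (le_of_lt ht)).symm) measurableSet_Ioi
    have key := optimal (fun t _ => hcont' t) hnn hz hmono hmeas hx hint hbud hC hC0 hCx
    have hval : ∫ t in Ioi (0:ℝ), (Real.exp (-t) + util (Φ t) (Φ t x)) =
        ∫ t in Ioi (0:ℝ), (Real.exp (-t) + util (Φ t) (cstar t (w t x))) :=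
      setIntegral_congr_fun measurableSet_Ioi fun t ht => by simp only [hcongr x hx t ht]
    rw [hval] at key
    refine ⟨key.1, fun h => ?_⟩
    filter_upwards [key.2 h, ae_restrict_mem measurableSet_Ioi] with t ht ht0
    rw [ht, hcongr x hx t ht0]
end

section
/- Let c*(t,w) satisfy c*(t,0) = 0 with c*(t,·) locally Lipschitz and strictly increasing in w, let w(t,x) solve ∂_t w(t,x) = −c*(t,w(t,x)), w(0,x) = x, assume x ↦ c*(t,w(t,x)) is differentiable with strictly positive derivative, set c̄(t) = sup_{x ≥ 0} c*(t,w(t,x)), let y(t,c) denote the inverse of x ↦ c*(t,w(t,x)), let D : (0,∞) → (0,∞) satisfy ∫_x^∞ D(ξ) dξ < ∞ for all x > 0, and define ∂_c u(t,c) = ∫_{y(t,c)}^∞ D(ξ) dξ for 0 < c < c̄(t). Then for each t, the function c ↦ ∂_c u(t,c) takes every value in (0,∞) as c ranges over (0, c̄(t)) (the Inada condition) if and only if ∫_x^∞ D(ξ) dξ → ∞ as x → 0+. -/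
/-!
Fix `t ≥ 0` and write `G x = c*(t, w(t, x))`, `F x = ∫_x^∞ D`.

Since `G` is continuous and strictly increasing on `[0, ∞)`, once `G 0 = 0` is known the levels
`c ∈ (0, c̄(t))` correspond through `y(t, ·)` exactly to the points `x ∈ (0, ∞)`. The Inada condition
then says that `F` maps `(0, ∞)` onto `(0, ∞)`, and as `F` is continuous, antitone and tends to `0`
at infinity, this is equivalent to `F x → ∞` as `x → 0+` (`tail_surj_iff`).

The point that needs care is `w(t, 0) = 0` (`flow_zero`), because the Lipschitz constants of
`c*(t, ·)` are not controlled in `t` and nothing is assumed on the sign of `c*(t, ·)` at negative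
wealth, so uniqueness for the ODE cannot be invoked. Instead:

* `x ↦ w(t, x)` is strictly increasing, since two trajectories that meet have the same consumption
  rate, against strict monotonicity of `G` (`flow_strictMono`); moreover differences of trajectories
  shrink in time, so `w(t, ·)` is continuous (`flow_continuousOn`).
* A trajectory that is positive at time `t` was positive before (`pos_of_pos_later`), since it
  decreases while positive. In particular `w(t, 0) ≤ 0`.
* If some trajectory is positive at time `t`, then at each `s ≤ t` some trajectory is at wealth `0`,
  so it has rate `0`, and the trajectory from `0` has rate at most `0` there. Hence `w(·, 0)` is
  nondecreasing on `[0, t]` and `w(t, 0) = 0` (`flow_zero_of_pos`).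
* If `w(t₁, 0) < 0`, let `T` be the last time before `t₁` with `w(T, 0) = 0`. Just after `T` all
  trajectories are nonpositive by the previous item, hence `w(T, x) ≤ 0` for all `x`, while
  `w(T, x) > w(T, 0) = 0` for `x > 0`.
-/

open MeasureTheory Set Filter

/-- A continuous function that is nonpositive at `a` and positive at `b` has a last time in
`[a, b]` at which it is nonpositive. -/
lemma exists_last_nonpos {f : ℝ → ℝ} {a b : ℝ} (hab : a ≤ b) (hf : ContinuousOn f (Icc a b))
    (ha : f a ≤ 0) (hb : 0 < f b) :
    ∃ s, a ≤ s ∧ s < b ∧ f s ≤ 0 ∧ ∀ r, s < r → r ≤ b → 0 < f r := by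
  have hcl : IsClosed (Icc a b ∩ f ⁻¹' Iic 0) :=
    hf.preimage_isClosed_of_isClosed isClosed_Icc isClosed_Iic
  have hcomp : IsCompact (Icc a b ∩ f ⁻¹' Iic 0) :=
    isCompact_Icc.of_isClosed_subset hcl inter_subset_left
  obtain ⟨s, ⟨hs, hs0⟩, hmax⟩ := hcomp.exists_isGreatest ⟨a, ⟨le_refl a, hab⟩, ha⟩
  have hs0 : f s ≤ 0 := hs0
  refine ⟨s, hs.1, lt_of_le_of_ne hs.2 ?_, hs0, fun r hr hrb => ?_⟩
  · rintro rfl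
    linarith
  · by_contra! h
    exact absurd (hmax ⟨⟨hs.1.trans hr.le, hrb⟩, h⟩) (not_le.2 hr)

/-- If `f` decreases whenever it is positive, then positivity propagates backwards in time. -/
lemma pos_of_pos_later {f h : ℝ → ℝ} (hf : ∀ t ≥ (0 : ℝ), HasDerivAt f (-h t) t)
    (hh : ∀ t ≥ (0 : ℝ), 0 < f t → 0 ≤ h t) {s t : ℝ} (hs : 0 ≤ s) (hst : s ≤ t)
    (ht : 0 < f t) : 0 < f s := by
  by_contra! hfs
  obtain ⟨r, hsr, hrt, hr0, hpos⟩ := exists_last_nonpos hst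
    (fun u hu => (hf u (hs.trans hu.1)).continuousAt.continuousWithinAt) hfs ht
  have hanti : AntitoneOn f (Icc r t) := by
    refine antitoneOn_of_deriv_nonpos (convex_Icc r t)
      (fun u hu => (hf u ((hs.trans hsr).trans hu.1)).continuousAt.continuousWithinAt) ?_ ?_
    · rw [interior_Icc]
      exact fun u hu =>
        (hf u ((hs.trans hsr).trans hu.1.le)).differentiableAt.differentiableWithinAt
    · rw [interior_Icc]
      intro u hu
      have hu0 : 0 ≤ u := (hs.trans hsr).trans hu.1.le
      rw [(hf u hu0).deriv]
      linarith [hh u hu0 (hpos u hu.1 hu.2.le)]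
  have := hanti ⟨le_refl r, hrt.le⟩ ⟨hrt.le, le_refl t⟩ hrt.le
  linarith

section Flow

variable {c w : ℝ → ℝ → ℝ}

/-- Trajectories do not cross: at a meeting time they would have equal consumption rates. -/
lemma flow_strictMono (hw0 : ∀ x ≥ (0 : ℝ), w 0 x = x)
    (hwode : ∀ x ≥ (0 : ℝ), ∀ t ≥ (0 : ℝ), HasDerivAt (fun s => w s x) (-(c t (w t x))) t)
    (hG : ∀ t ≥ (0 : ℝ), StrictMonoOn (fun x => c t (w t x)) (Ici 0))
    {t : ℝ} (ht : 0 ≤ t) : StrictMonoOn (w t) (Ici 0) := by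
  intro x hx z hz hxz
  by_contra! hle
  have hcont : ContinuousOn (fun s => w s z - w s x) (Icc 0 t) := fun u hu =>
    ((hwode z hz u hu.1).continuousAt.sub (hwode x hx u hu.1).continuousAt).continuousWithinAt
  have hmem : (0 : ℝ) ∈ Icc (w t z - w t x) (w 0 z - w 0 x) := by
    rw [hw0 z hz, hw0 x hx]
    exact ⟨by linarith, by linarith⟩
  obtain ⟨s, hs, hs0⟩ := intermediate_value_Icc' ht hcont hmem
  have heq : w s z = w s x := sub_eq_zero.1 hs0
  have := hG s hs.1 hx hz hxz
  simp only [heq, lt_irrefl] at this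

lemma flow_sub_le (hw0 : ∀ x ≥ (0 : ℝ), w 0 x = x)
    (hwode : ∀ x ≥ (0 : ℝ), ∀ t ≥ (0 : ℝ), HasDerivAt (fun s => w s x) (-(c t (w t x))) t)
    (hG : ∀ t ≥ (0 : ℝ), StrictMonoOn (fun x => c t (w t x)) (Ici 0))
    {t : ℝ} (ht : 0 ≤ t) {x z : ℝ} (hx : 0 ≤ x) (hxz : x ≤ z) :
    w t z - w t x ≤ z - x := by
  have hz : 0 ≤ z := hx.trans hxz
  have hd : ∀ u ≥ (0 : ℝ), HasDerivAt (fun s => w s z - w s x)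
      (-(c u (w u z)) - -(c u (w u x))) u := fun u hu => (hwode z hz u hu).sub (hwode x hx u hu)
  have hanti : AntitoneOn (fun s => w s z - w s x) (Ici 0) := by
    refine antitoneOn_of_deriv_nonpos (convex_Ici 0)
      (fun u hu => (hd u hu).continuousAt.continuousWithinAt) ?_ ?_
    · rw [interior_Ici]
      exact fun u hu => (hd u (le_of_lt hu)).differentiableAt.differentiableWithinAt
    · rw [interior_Ici]
      intro u hu
      rw [(hd u (le_of_lt hu)).deriv]
      have : c u (w u x) ≤ c u (w u z) := (hG u (le_of_lt hu)).monotoneOn hx hz hxz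
      linarith
  have h := hanti (mem_Ici.2 le_rfl) (mem_Ici.2 ht) ht
  simp only [hw0 z hz, hw0 x hx] at h
  exact h

lemma flow_continuousOn (hw0 : ∀ x ≥ (0 : ℝ), w 0 x = x)
    (hwode : ∀ x ≥ (0 : ℝ), ∀ t ≥ (0 : ℝ), HasDerivAt (fun s => w s x) (-(c t (w t x))) t)
    (hG : ∀ t ≥ (0 : ℝ), StrictMonoOn (fun x => c t (w t x)) (Ici 0))
    {t : ℝ} (ht : 0 ≤ t) : ContinuousOn (w t) (Ici 0) := by
  refine LipschitzOnWith.continuousOn (K := 1) (LipschitzOnWith.of_le_add fun x hx z hz => ?_)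
  rw [Real.dist_eq]
  rcases le_total x z with h | h
  · linarith [(flow_strictMono hw0 hwode hG ht).monotoneOn hx hz h, abs_nonneg (x - z)]
  · linarith [flow_sub_le hw0 hwode hG ht hz h, le_abs_self (x - z)]

lemma rate_nonneg (hc0 : ∀ t ≥ (0 : ℝ), c t 0 = 0)
    (hcmono : ∀ t ≥ (0 : ℝ), StrictMonoOn (c t) (Ici 0)) {t v : ℝ} (ht : 0 ≤ t) (hv : 0 < v) :
    0 ≤ c t v := by
  rw [← hc0 t ht]
  exact (hcmono t ht (mem_Ici.2 le_rfl) hv.le hv).le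

lemma flow_zero_nonpos (hc0 : ∀ t ≥ (0 : ℝ), c t 0 = 0)
    (hcmono : ∀ t ≥ (0 : ℝ), StrictMonoOn (c t) (Ici 0))
    (hw0 : ∀ x ≥ (0 : ℝ), w 0 x = x)
    (hwode : ∀ x ≥ (0 : ℝ), ∀ t ≥ (0 : ℝ), HasDerivAt (fun s => w s x) (-(c t (w t x))) t)
    {t : ℝ} (ht : 0 ≤ t) : w t 0 ≤ 0 := by
  by_contra! h
  have := pos_of_pos_later (hwode 0 le_rfl) (fun u hu hp => rate_nonneg hc0 hcmono hu hp)
    le_rfl ht h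
  rw [hw0 0 le_rfl] at this
  exact lt_irrefl _ this

/-- As long as some trajectory is still positive, the trajectory started at `0` has not left `0`. -/
lemma flow_zero_of_pos (hc0 : ∀ t ≥ (0 : ℝ), c t 0 = 0)
    (hcmono : ∀ t ≥ (0 : ℝ), StrictMonoOn (c t) (Ici 0))
    (hw0 : ∀ x ≥ (0 : ℝ), w 0 x = x)
    (hwode : ∀ x ≥ (0 : ℝ), ∀ t ≥ (0 : ℝ), HasDerivAt (fun s => w s x) (-(c t (w t x))) t)
    (hG : ∀ t ≥ (0 : ℝ), StrictMonoOn (fun x => c t (w t x)) (Ici 0))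
    {t x : ℝ} (ht : 0 ≤ t) (hx : 0 ≤ x) (hpos : 0 < w t x) : w t 0 = 0 := by
  refine le_antisymm (flow_zero_nonpos hc0 hcmono hw0 hwode ht) ?_
  have hrate : ∀ s, 0 ≤ s → s ≤ t → c s (w s 0) ≤ 0 := by
    intro s hs hst
    have hsx : 0 < w s x := pos_of_pos_later (hwode x hx)
      (fun u hu hp => rate_nonneg hc0 hcmono hu hp) hs hst hpos
    obtain ⟨z, hz, hz0⟩ := intermediate_value_Icc hx
      ((flow_continuousOn hw0 hwode hG hs).mono Icc_subset_Ici_self)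
      ⟨flow_zero_nonpos hc0 hcmono hw0 hwode hs, hsx.le⟩
    have h : c s (w s 0) ≤ c s (w s z) := (hG s hs).monotoneOn (mem_Ici.2 le_rfl) hz.1 hz.1
    rwa [hz0, hc0 s hs] at h
  have hmono : MonotoneOn (fun s => w s 0) (Icc 0 t) := by
    refine monotoneOn_of_deriv_nonneg (convex_Icc 0 t)
      (fun u hu => (hwode 0 le_rfl u hu.1).continuousAt.continuousWithinAt) ?_ ?_
    · rw [interior_Icc]
      exact fun u hu => (hwode 0 le_rfl u hu.1.le).differentiableAt.differentiableWithinAt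
    · rw [interior_Icc]
      intro u hu
      rw [(hwode 0 le_rfl u hu.1.le).deriv]
      linarith [hrate u hu.1.le hu.2.le]
  have h := hmono ⟨le_rfl, ht⟩ ⟨ht, le_rfl⟩ ht
  simp only [hw0 0 le_rfl] at h
  exact h

lemma flow_zero (hc0 : ∀ t ≥ (0 : ℝ), c t 0 = 0)
    (hcmono : ∀ t ≥ (0 : ℝ), StrictMonoOn (c t) (Ici 0))
    (hw0 : ∀ x ≥ (0 : ℝ), w 0 x = x)
    (hwode : ∀ x ≥ (0 : ℝ), ∀ t ≥ (0 : ℝ), HasDerivAt (fun s => w s x) (-(c t (w t x))) t)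
    (hG : ∀ t ≥ (0 : ℝ), StrictMonoOn (fun x => c t (w t x)) (Ici 0))
    {t : ℝ} (ht : 0 ≤ t) : w t 0 = 0 := by
  by_contra hne
  have hneg : w t 0 < 0 := lt_of_le_of_ne (flow_zero_nonpos hc0 hcmono hw0 hwode ht) hne
  obtain ⟨T, hT, hTt, hT0, hafter⟩ := exists_last_nonpos (f := fun s => -w s 0) ht
    (fun u hu => (hwode 0 le_rfl u hu.1).continuousAt.neg.continuousWithinAt)
    (by simp [hw0 0 le_rfl]) (by simpa using hneg)
  -- Just after `T` every trajectory is nonpositive; pass to the limit at `T` for the one from `1`.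
  have hle : w T 1 ≤ 0 := by
    refine le_of_tendsto ((hwode 1 zero_le_one T hT).continuousAt.tendsto.mono_left
      (nhdsWithin_le_nhds (s := Ioi T))) ?_
    filter_upwards [Ioo_mem_nhdsGT hTt] with r hr
    by_contra! hp
    have h1 := flow_zero_of_pos hc0 hcmono hw0 hwode hG (hT.trans hr.1.le) zero_le_one hp
    have h2 := hafter r hr.1 hr.2.le
    simp only [h1, neg_zero, lt_irrefl] at h2
  have := flow_strictMono hw0 hwode hG hT (mem_Ici.2 le_rfl) (mem_Ici.2 zero_le_one) zero_lt_one
  linarith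

end Flow

/-- The tail integral of a positive density maps `(0, ∞)` onto `(0, ∞)` if and only if it blows up
at `0+`. -/
lemma tail_surj_iff {D : ℝ → ℝ} (hD : ∀ x > (0 : ℝ), 0 < D x)
    (hDint : ∀ x > (0 : ℝ), IntegrableOn D (Ioi x)) :
    (∀ v > (0 : ℝ), ∃ x > (0 : ℝ), (∫ ξ in Ioi x, D ξ) = v) ↔
      Tendsto (fun x => ∫ ξ in Ioi x, D ξ) (nhdsWithin 0 (Ioi (0 : ℝ))) atTop := by
  have hanti : ∀ x > (0 : ℝ), ∀ z, x ≤ z → (∫ ξ in Ioi z, D ξ) ≤ ∫ ξ in Ioi x, D ξ := by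
    intro x hx z hxz
    refine setIntegral_mono_set (hDint x hx) ?_ (Ioi_subset_Ioi hxz).eventuallyLE
    filter_upwards [ae_restrict_mem measurableSet_Ioi] with ξ hξ
    exact (hD ξ (hx.trans hξ)).le
  constructor
  · intro h
    refine tendsto_atTop.2 fun v => ?_
    obtain ⟨x, hx, hxv⟩ := h (max v 1) (by positivity)
    filter_upwards [Ioo_mem_nhdsGT hx] with z hz
    calc v ≤ max v 1 := le_max_left _ _
      _ = ∫ ξ in Ioi x, D ξ := hxv.symm
      _ ≤ _ := hanti z hz.1 x hz.2.le
  · intro h v hv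
    obtain ⟨a, hav, ha⟩ := ((h.eventually_ge_atTop v).and self_mem_nhdsWithin).exists
    have ha : 0 < a := ha
    have hsplit : ∀ x, a ≤ x →
        (∫ ξ in Ioi x, D ξ) = (∫ ξ in Ioi a, D ξ) - ∫ ξ in a..x, D ξ := by
      intro x hx
      rw [← intervalIntegral.integral_Ioi_sub_Ioi (hDint a ha) hx]
      ring
    have hlim : Tendsto (fun x => ∫ ξ in Ioi x, D ξ) atTop (nhds 0) := by
      have h1 := (tendsto_const_nhds (x := ∫ ξ in Ioi a, D ξ)).sub
        (intervalIntegral_tendsto_integral_Ioi a (hDint a ha) tendsto_id)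
      rw [sub_self] at h1
      refine h1.congr' ?_
      filter_upwards [eventually_ge_atTop a] with x hx
      exact (hsplit x hx).symm
    obtain ⟨b, hbv, hab⟩ := ((hlim.eventually_lt_const hv).and (eventually_ge_atTop a)).exists
    have hcont : ContinuousOn (fun x => ∫ ξ in Ioi x, D ξ) (Icc a b) := by
      have h1 : ContinuousOn (fun x => ∫ ξ in a..x, D ξ) (Icc a b) := by
        rw [← uIcc_of_le hab]
        refine intervalIntegral.continuousOn_primitive_interval' ?_ left_mem_uIcc
        rw [intervalIntegrable_iff_integrableOn_Ioc_of_le hab]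
        exact (hDint a ha).mono_set Ioc_subset_Ioi_self
      exact (continuousOn_const.sub h1).congr fun x hx => hsplit x hx.1
    obtain ⟨x, hx, hxv⟩ := intermediate_value_Icc' hab hcont ⟨hbv.le, hav⟩
    exact ⟨x, ha.trans_le hx.1, hxv⟩

theorem stmt_3
    (cstar : ℝ → ℝ → ℝ) (w : ℝ → ℝ → ℝ) (dc : ℝ → ℝ → ℝ)
    (cbar : ℝ → ENNReal) (y : ℝ → ℝ → ℝ) (D : ℝ → ℝ)
    (hc0 : ∀ t ≥ (0:ℝ), cstar t 0 = 0)
    (hclip : ∀ t ≥ (0:ℝ), LocallyLipschitz (cstar t))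
    (hcmono : ∀ t ≥ (0:ℝ), StrictMonoOn (cstar t) (Ici 0))
    (hw0 : ∀ x ≥ (0:ℝ), w 0 x = x)
    (hwode : ∀ x ≥ (0:ℝ), ∀ t ≥ (0:ℝ),
      HasDerivAt (fun s => w s x) (-(cstar t (w t x))) t)
    (hdc : ∀ t ≥ (0:ℝ), ∀ x ≥ (0:ℝ), HasDerivAt (fun z => cstar t (w t z)) (dc t x) x)
    (hdcpos : ∀ t ≥ (0:ℝ), ∀ x ≥ (0:ℝ), 0 < dc t x)
    (hcbar : ∀ t ≥ (0:ℝ),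
      cbar t = ⨆ x : {x : ℝ // 0 ≤ x}, ENNReal.ofReal (cstar t (w t x.1)))
    (hy : ∀ t ≥ (0:ℝ), ∀ c : ℝ, 0 < c → ENNReal.ofReal c < cbar t →
      0 ≤ y t c ∧ cstar t (w t (y t c)) = c)
    (hyuniq : ∀ t ≥ (0:ℝ), ∀ x ≥ (0:ℝ), y t (cstar t (w t x)) = x)
    (hD : ∀ x > (0:ℝ), 0 < D x)
    (hDint : ∀ x > (0:ℝ), IntegrableOn D (Ioi x)) :
    ∀ t ≥ (0:ℝ),
      ((∀ v > (0:ℝ), ∃ c : ℝ, 0 < c ∧ ENNReal.ofReal c < cbar t ∧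
          (∫ ξ in Ioi (y t c), D ξ) = v)
        ↔ Tendsto (fun x => ∫ ξ in Ioi x, D ξ) (nhdsWithin 0 (Ioi (0:ℝ))) atTop) := by
  intro t ht
  have hG : ∀ t ≥ (0 : ℝ), StrictMonoOn (fun x => cstar t (w t x)) (Ici 0) := by
    intro s hs
    refine strictMonoOn_of_deriv_pos (convex_Ici 0)
      (fun x hx => (hdc s hs x hx).continuousAt.continuousWithinAt) ?_
    rw [interior_Ici]
    intro x hx
    rw [(hdc s hs x (le_of_lt hx)).deriv]
    exact hdcpos s hs x (le_of_lt hx)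
  have hG0 : cstar t (w t 0) = 0 := by
    rw [flow_zero hc0 hcmono hw0 hwode hG ht, hc0 t ht]
  rw [← tail_surj_iff hD hDint]
  refine forall₂_congr fun v _ => ⟨?_, ?_⟩
  · rintro ⟨c, hc, hcb, hv⟩
    obtain ⟨hy0, hyc⟩ := hy t ht c hc hcb
    refine ⟨y t c, lt_of_le_of_ne hy0 fun h => ?_, hv⟩
    rw [← h, hG0] at hyc
    exact hc.ne hyc
  · rintro ⟨x, hx, hv⟩
    have hpos : 0 < cstar t (w t x) := by
      rw [← hG0]
      exact hG t ht (mem_Ici.2 le_rfl) (mem_Ici.2 hx.le) hx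
    -- The supremum is not attained: the rate at `x + 1` already exceeds the one at `x`.
    have hx1 : (0 : ℝ) ≤ x + 1 := by linarith
    have hlt : cstar t (w t x) < cstar t (w t (x + 1)) :=
      hG t ht (mem_Ici.2 hx.le) (mem_Ici.2 hx1) (lt_add_one x)
    refine ⟨cstar t (w t x), hpos, ?_, by rwa [hyuniq t ht x hx.le]⟩
    rw [hcbar t ht]
    exact ((ENNReal.ofReal_lt_ofReal_iff (hpos.trans hlt)).2 hlt).trans_le
      (le_iSup (fun x : {x : ℝ // 0 ≤ x} => ENNReal.ofReal (cstar t (w t x.1))) ⟨x + 1, hx1⟩)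
end

section
/- Let c*(t,w) satisfy c*(t,0) = 0 with c*(t,·) locally Lipschitz and strictly increasing in w, let w(t,x) solve ∂_t w(t,x) = −c*(t,w(t,x)), w(0,x) = x, and assume x ↦ c*(t,w(t,x)) is twice differentiable with strictly positive first derivative. Let D : (0,∞) → (0,∞) be differentiable with ∫_x^∞ D(ξ) dξ < ∞ for all x > 0, and let u be a utility with ∂_c u(t, c*(t,w(t,x))) = ∫_x^∞ D(ξ) dξ. Then the absolute risk aversion ρ(t,c) = −∂²_c u(t,c) / ∂_c u(t,c) satisfies ρ(t, c*(t,w(t,x))) = D(x) / ( ∂_x c*(t,w(t,x)) · ∫_x^∞ D(ξ) dξ ), and the sign of ∂_c ρ(t,c) at c = c*(t,w(t,x)) equals the sign of D'(x)/D(x) + D(x)/∫_x^∞ D(ξ) dξ − (∂²_x c*(t,w(t,x))) / (∂_x c*(t,w(t,x))). -/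
/-! The analytic core is elementary: writing `S z = ∫ ξ in Ioi z, D ξ` and `C z = cstar t (w t z)`,
differentiating `du t (C z) = S z` gives `d2u t (C z) * dc t z = -D z`, hence the formula
`D / (dc * S)` for the risk aversion along `C`; its logarithmic derivative in `z` is
`D' / D + D / S - d2c / dc`, and the chain rule divides by the positive number `dc`.

All of this takes place at consumption levels `C z > 0`, so one needs `w t z > 0`
(`wealth_pos`). This is not a plain ODE uniqueness statement, because the Lipschitz constants of
`cstar t` are not controlled in `t`, and nothing is said about `cstar` at negative wealth.
Suppose some path reaches `0`. As `x ↦ cstar t (w t x)` is strictly increasing, every path with a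
smaller initial wealth reaches `0` strictly earlier, so the first hitting time `T` is strictly
increasing on some interval `(0, a)`. At time `T x`, Lipschitz continuity of `cstar (T x)` near `0`
and `dc > 0` give `w (T x) y ≥ k (y - x)` for `y > x` close to `x`. On the other hand the path
from `y` has zero speed at time `T y`, since `cstar t 0 = 0`, so that
`w (T x) y = o (T y - T x)` as `x → y`. By Lebesgue's theorem the monotone `T` is differentiable
almost everywhere, so this is `o (y - x)` for almost every `y`; splitting `(0, a)` into countably
many pieces on which `k` is uniform yields a contradiction (`no_monotone_hitting`). -/

open MeasureTheory Set

open Filter Topology in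
/-- A strictly positive uniform lower slope `k` at hitting times is incompatible with paths arriving
at `0` with zero speed, when the hitting time `T` is monotone in the initial point. -/
lemma no_monotone_hitting (a : ℝ) (ha : 0 < a) (T : ℝ → ℝ) (w : ℝ → ℝ → ℝ)
    (hT : MonotoneOn T (Ioo 0 a))
    (hw : ∀ x ∈ Ioo 0 a, w (T x) x = 0)
    (hd : ∀ x ∈ Ioo 0 a, HasDerivAt (fun s => w s x) 0 (T x))
    (hk : ∀ x ∈ Ioo 0 a, ∃ k > 0, ∃ δ > 0, ∀ y ∈ Ioo 0 a, x < y → y < x + δ →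
      k * (y - x) ≤ w (T x) y) : False := by
  let E : ℕ → Set ℝ := fun n => {x | x ∈ Ioo 0 a ∧ ∀ y ∈ Ioo 0 a, x < y →
    y < x + 1 / ((n : ℝ) + 1) → 1 / ((n : ℝ) + 1) * (y - x) ≤ w (T x) y}
  have hE : ∀ x ∈ Ioo 0 a, ∃ n, x ∈ E n := by
    intro x hx
    obtain ⟨k, hk0, δ, hδ, h⟩ := hk x hx
    obtain ⟨n, hn⟩ := exists_nat_one_div_lt (lt_min hk0 hδ)
    refine ⟨n, hx, fun y hy hxy hyn => ?_⟩
    have h1 := lt_min_iff.1 hn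
    refine le_trans ?_ (h y hy hxy (by linarith [h1.2]))
    exact mul_le_mul_of_nonneg_right h1.1.le (by linarith)
  -- Only countably many points of `E n` fail to be limits of points of `E n` from the left.
  have hiso : ∀ᵐ x : ℝ, ∀ n, ¬ (x ∈ E n ∧ 𝓝[E n ∩ Iio x] x = ⊥) := by
    rw [ae_all_iff]
    intro n
    have hc : {x | x ∈ E n ∧ 𝓝[E n ∩ Iio x] x = ⊥}.Countable :=
      countable_setOfPred_isolated_left_within
    exact hc.ae_notMem volume
  have hvol : (volume (Ioo (0 : ℝ) a)) ≠ 0 := by simp [ha]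
  obtain ⟨y, hy, hTd, hyiso⟩ : ∃ y ∈ Ioo 0 a, DifferentiableWithinAt ℝ T (Ioo 0 a) y ∧
      ∀ n, ¬ (y ∈ E n ∧ 𝓝[E n ∩ Iio y] y = ⊥) := by
    by_contra! hcon
    apply hvol
    have : ∀ᵐ x : ℝ, x ∉ Ioo 0 a := by
      filter_upwards [hT.ae_differentiableWithinAt_of_mem, hiso] with x h1 h2 hx
      obtain ⟨n, hn⟩ := hcon x hx (h1 hx)
      exact h2 n hn
    exact measure_eq_zero_iff_ae_notMem.2 this
  obtain ⟨n, hn⟩ := hE y hy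
  have hne : (𝓝[E n ∩ Iio y] y).NeBot := ⟨fun h => hyiso n ⟨hn, h⟩⟩
  have hTd' : HasDerivAt T (deriv T y) y :=
    (hTd.differentiableAt (isOpen_Ioo.mem_nhds hy)).hasDerivAt
  have hg : HasDerivAt (fun x => w (T x) y) (0 * deriv T y) y :=
    HasDerivAt.comp y (hd y hy) hTd'
  have hκ : (0 : ℝ) < 1 / ((n : ℝ) + 1) := by positivity
  have hlo := (hasDerivAt_iff_isLittleO.1 hg).def (half_pos hκ)
  have hnear : ∀ᶠ x in 𝓝 y, y < x + 1 / ((n : ℝ) + 1) := by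
    have : ∀ᶠ x in 𝓝 y, y - 1 / ((n : ℝ) + 1) < x := lt_mem_nhds (by linarith)
    filter_upwards [this] with x hx
    linarith
  obtain ⟨x, ⟨h1, h2⟩, hxE, hxy⟩ := (((hlo.and hnear).filter_mono nhdsWithin_le_nhds).and
    (eventually_mem_nhdsWithin (a := y) (s := E n ∩ Iio y))).exists
  have hxy : x < y := hxy
  have h3 := hxE.2 y hy hxy h2
  simp only [hw y hy, zero_mul, smul_zero, sub_zero, Real.norm_eq_abs] at h1
  rw [abs_of_neg (sub_neg.2 hxy)] at h1
  have h4 := le_trans h3 (le_trans (le_abs_self _) h1)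
  nlinarith [mul_pos hκ (sub_pos.2 hxy)]

lemma exists_first_zero (f : ℝ → ℝ) (hf : ContinuousOn f (Ici 0)) (h0 : 0 < f 0)
    (t : ℝ) (ht : 0 ≤ t) (hft : f t ≤ 0) :
    ∃ T, 0 ≤ T ∧ T ≤ t ∧ f T = 0 ∧ ∀ s, 0 ≤ s → s < T → 0 < f s := by
  have hcl : IsClosed (Ici 0 ∩ f ⁻¹' Iic 0) := hf.preimage_isClosed_of_isClosed isClosed_Ici isClosed_Iic
  have hbd : BddBelow (Ici 0 ∩ f ⁻¹' Iic 0) := ⟨0, fun s hs => hs.1⟩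
  have hmem := hcl.csInf_mem ⟨t, ht, hft⟩ hbd
  have hpos : ∀ s, 0 ≤ s → s < sInf (Ici 0 ∩ f ⁻¹' Iic 0) → 0 < f s := by
    intro s hs hsT
    by_contra! hcon
    exact absurd (csInf_le hbd ⟨hs, hcon⟩) (not_le.2 hsT)
  refine ⟨sInf (Ici 0 ∩ f ⁻¹' Iic 0), hmem.1, csInf_le hbd ⟨ht, hft⟩, ?_, hpos⟩
  obtain ⟨s, hs, hs0⟩ := intermediate_value_Icc' hmem.1 (hf.mono Icc_subset_Ici_self)
    ⟨hmem.2, h0.le⟩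
  rcases hs.2.lt_or_eq with h | h
  · exact absurd hs0 (hpos s hs.1 h).ne'
  · rwa [← h]

open Filter Topology in
/-- Wealth started from a positive level stays positive, although the Lipschitz constants of
`cstar t` need not be locally integrable in `t`. -/
lemma wealth_pos
    (cstar : ℝ → ℝ → ℝ) (w : ℝ → ℝ → ℝ) (dc : ℝ → ℝ → ℝ)
    (hc0 : ∀ t ≥ (0:ℝ), cstar t 0 = 0)
    (hclip : ∀ t ≥ (0:ℝ), LocallyLipschitz (cstar t))
    (hcmono : ∀ t ≥ (0:ℝ), StrictMonoOn (cstar t) (Ici 0))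
    (hw0 : ∀ x ≥ (0:ℝ), w 0 x = x)
    (hwode : ∀ x ≥ (0:ℝ), ∀ t ≥ (0:ℝ),
      HasDerivAt (fun s => w s x) (-(cstar t (w t x))) t)
    (hdc : ∀ t ≥ (0:ℝ), ∀ x > (0:ℝ), HasDerivAt (fun z => cstar t (w t z)) (dc t x) x)
    (hdcpos : ∀ t ≥ (0:ℝ), ∀ x > (0:ℝ), 0 < dc t x) :
    ∀ t ≥ (0:ℝ), ∀ x > (0:ℝ), 0 < w t x := by
  intro t ht a ha
  by_contra! hcon
  have hmono : ∀ t ≥ (0:ℝ), StrictMonoOn (fun z => cstar t (w t z)) (Ioi 0) := by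
    intro t ht
    refine strictMonoOn_of_deriv_pos (convex_Ioi 0)
      (fun x hx => (hdc t ht x hx).continuousAt.continuousWithinAt) fun x hx => ?_
    rw [interior_Ioi] at hx
    rw [(hdc t ht x hx).deriv]
    exact hdcpos t ht x hx
  have hcnn : ∀ t ≥ (0:ℝ), ∀ v ≥ (0:ℝ), 0 ≤ cstar t v := by
    intro t ht v hv
    rw [← hc0 t ht]
    exact (hcmono t ht).monotoneOn self_mem_Ici hv hv
  have hcont : ∀ x > (0:ℝ), ContinuousOn (fun s => w s x) (Ici 0) := fun x hx s hs =>
    (hwode x hx.le s hs).continuousAt.continuousWithinAt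
  have hfirst := fun x (hx : 0 < x) => exists_first_zero (fun s => w s x) (hcont x hx)
    (by simpa [hw0 x hx.le] using hx)
  -- When one path is at `0`, all paths from smaller initial wealth have negative wealth.
  have hneg : ∀ s ≥ (0:ℝ), ∀ x > 0, ∀ y, x < y → w s y = 0 → w s x < 0 := by
    intro s hs x hx y hxy hy
    by_contra! h
    have h1 := hmono s hs (mem_Ioi.2 hx) (mem_Ioi.2 (hx.trans hxy)) hxy
    simp only [hy, hc0 s hs] at h1
    exact absurd (hcnn s hs _ h) (not_le.2 h1)
  obtain ⟨ta, hta, -, hta0, -⟩ := hfirst a ha t ht hcon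
  have hhit : ∀ x, ∃ T, x ∈ Ioo 0 a →
      0 ≤ T ∧ w T x = 0 ∧ ∀ s, 0 ≤ s → s < T → 0 < w s x := by
    intro x
    by_cases hx : x ∈ Ioo 0 a
    · obtain ⟨T, h1, -, h2, h3⟩ := hfirst x hx.1 ta hta (hneg ta hta x hx.1 a hx.2 hta0).le
      exact ⟨T, fun _ => ⟨h1, h2, h3⟩⟩
    · exact ⟨0, fun h => absurd h hx⟩
  choose T hT using hhit
  have hTlt : ∀ x ∈ Ioo 0 a, ∀ y ∈ Ioo 0 a, x < y → T x < T y := by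
    intro x hx y hy hxy
    obtain ⟨hy1, hy2, hy3⟩ := hT y hy
    have h1 := hneg (T y) hy1 x hx.1 y hxy hy2
    by_contra! h
    rcases h.lt_or_eq with h | h
    · exact absurd ((hT x hx).2.2 _ hy1 h) (not_lt.2 h1.le)
    · rw [h, (hT x hx).2.1] at h1
      exact lt_irrefl _ h1
  refine no_monotone_hitting a ha T w ?_ (fun x hx => (hT x hx).2.1) ?_ ?_
  · intro x hx y hy hxy
    rcases hxy.lt_or_eq with h | h
    · exact (hTlt x hx y hy h).le
    · rw [h]
  · intro x hx
    obtain ⟨h1, h2, -⟩ := hT x hx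
    have := hwode x hx.1.le (T x) h1
    rwa [h2, hc0 _ h1, neg_zero] at this
  · intro x hx
    obtain ⟨h1, h2, -⟩ := hT x hx
    obtain ⟨K, V, hV, hK⟩ := hclip (T x) h1 0
    obtain ⟨ε, hε, hεV⟩ := Metric.mem_nhds_iff.1 hV
    have hd := hdc (T x) h1 x hx.1
    have hdp := hdcpos (T x) h1 x hx.1
    have hC0 : cstar (T x) (w (T x) x) = 0 := by rw [h2, hc0 _ h1]
    have hcε : 0 < cstar (T x) (ε / 2) := by
      rw [← hc0 _ h1]
      exact hcmono _ h1 self_mem_Ici (half_pos hε).le (half_pos hε)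
    have hsmall : ∀ᶠ y in 𝓝 x, cstar (T x) (w (T x) y) < cstar (T x) (ε / 2) :=
      hd.continuousAt.eventually_lt_const (by simpa [hC0] using hcε)
    have hlo := (hasDerivAt_iff_isLittleO.1 hd).def (half_pos hdp)
    obtain ⟨δ, hδ, hball⟩ := Metric.eventually_nhds_iff.1 (hsmall.and hlo)
    refine ⟨dc (T x) x / 2 / (K + 1), by positivity, δ, hδ, fun y hy hxy hyδ => ?_⟩
    obtain ⟨h3, h4⟩ := hball (show dist y x < δ by
      rw [Real.dist_eq, abs_of_pos (sub_pos.2 hxy)]; linarith)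
    have hwy : 0 < w (T x) y := (hT y hy).2.2 _ h1 (hTlt x hx y hy hxy)
    -- A small consumption rate forces a small wealth, by strict monotonicity of `cstar (T x)`.
    have hwε : w (T x) y < ε / 2 :=
      ((hcmono _ h1).lt_iff_lt (mem_Ici.2 hwy.le) (mem_Ici.2 (half_pos hε).le)).1 h3
    have h5 := hK.dist_le_mul (w (T x) y) (hεV (by
      rw [Metric.mem_ball, Real.dist_eq, sub_zero, abs_of_pos hwy]; linarith)) 0
      (mem_of_mem_nhds hV)
    rw [hc0 _ h1, Real.dist_eq, Real.dist_eq, sub_zero, sub_zero, abs_of_pos hwy] at h5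
    simp only [hC0, sub_zero, smul_eq_mul, Real.norm_eq_abs, abs_of_pos (sub_pos.2 hxy)] at h4
    have h6 := (abs_le.1 h4).1
    have h7 := le_trans (le_abs_self _) h5
    have hK0 : (0 : ℝ) ≤ K := K.2
    rw [div_mul_eq_mul_div, div_le_iff₀ (by positivity)]
    nlinarith

lemma hasDerivAt_integral_Ioi (D : ℝ → ℝ) (hD : ∀ x > (0:ℝ), ContinuousAt D x)
    (hDint : ∀ x > (0:ℝ), IntegrableOn D (Ioi x)) (x : ℝ) (hx : 0 < x) :
    HasDerivAt (fun z => ∫ ξ in Ioi z, D ξ) (-(D x)) x := by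
  have hii : ∀ z > (0:ℝ), IntervalIntegrable D volume x z := fun z hz => by
    rw [intervalIntegrable_iff]
    exact (hDint _ (lt_min hx hz)).mono_set fun v hv => hv.1
  have hmeas : StronglyMeasurableAtFilter D (nhds x) :=
    ContinuousOn.stronglyMeasurableAtFilter isOpen_Ioi
      (fun z hz => (hD z hz).continuousWithinAt) x (mem_Ioi.2 hx)
  have h := (intervalIntegral.integral_hasDerivAt_right (hii x hx) hmeas (hD x hx)).const_sub
    (∫ ξ in Ioi x, D ξ)
  refine h.congr_of_eventuallyEq ?_
  filter_upwards [lt_mem_nhds hx] with z hz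
  have := intervalIntegral.integral_interval_add_Ioi' (hii z hz) (hDint z hz)
  linarith

theorem stmt_4
    (cstar : ℝ → ℝ → ℝ) (w : ℝ → ℝ → ℝ) (dc d2c : ℝ → ℝ → ℝ)
    (D D' : ℝ → ℝ) (u du d2u drho : ℝ → ℝ → ℝ)
    (hc0 : ∀ t ≥ (0:ℝ), cstar t 0 = 0)
    (hclip : ∀ t ≥ (0:ℝ), LocallyLipschitz (cstar t))
    (hcmono : ∀ t ≥ (0:ℝ), StrictMonoOn (cstar t) (Ici 0))
    (hw0 : ∀ x ≥ (0:ℝ), w 0 x = x)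
    (hwode : ∀ x ≥ (0:ℝ), ∀ t ≥ (0:ℝ),
      HasDerivAt (fun s => w s x) (-(cstar t (w t x))) t)
    (hdc : ∀ t ≥ (0:ℝ), ∀ x > (0:ℝ), HasDerivAt (fun z => cstar t (w t z)) (dc t x) x)
    (hd2c : ∀ t ≥ (0:ℝ), ∀ x > (0:ℝ), HasDerivAt (dc t) (d2c t x) x)
    (hdcpos : ∀ t ≥ (0:ℝ), ∀ x > (0:ℝ), 0 < dc t x)
    (hD : ∀ x > (0:ℝ), 0 < D x)
    (hD' : ∀ x > (0:ℝ), HasDerivAt D (D' x) x)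
    (hDint : ∀ x > (0:ℝ), IntegrableOn D (Ioi x))
    (hdu : ∀ t ≥ (0:ℝ), ∀ c > (0:ℝ), HasDerivAt (u t) (du t c) c)
    (hd2u : ∀ t ≥ (0:ℝ), ∀ c > (0:ℝ), HasDerivAt (du t) (d2u t c) c)
    (hduid : ∀ t ≥ (0:ℝ), ∀ x > (0:ℝ),
      du t (cstar t (w t x)) = ∫ ξ in Ioi x, D ξ)
    (hdrho : ∀ t ≥ (0:ℝ), ∀ c > (0:ℝ),
      HasDerivAt (fun v => -(d2u t v) / du t v) (drho t c) c) :
    ∀ t ≥ (0:ℝ), ∀ x > (0:ℝ),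
      (-(d2u t (cstar t (w t x))) / du t (cstar t (w t x))
          = D x / (dc t x * ∫ ξ in Ioi x, D ξ)) ∧
      Real.sign (drho t (cstar t (w t x)))
          = Real.sign (D' x / D x + D x / (∫ ξ in Ioi x, D ξ) - d2c t x / dc t x) := by
  have hwpos := wealth_pos cstar w dc hc0 hclip hcmono hw0 hwode hdc hdcpos
  intro t ht x hx
  have hcpos : ∀ z > (0:ℝ), 0 < cstar t (w t z) := fun z hz => by
    rw [← hc0 t ht]
    exact hcmono t ht self_mem_Ici (hwpos t ht z hz).le (hwpos t ht z hz)
  have hS : ∀ z > (0:ℝ), 0 < ∫ ξ in Ioi z, D ξ := fun z hz => by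
    rw [setIntegral_pos_iff_support_of_nonneg_ae _ (hDint z hz)]
    · have hsub : Ioi z ⊆ Function.support D := fun v hv => (hD v (hz.trans hv)).ne'
      rw [inter_eq_self_of_subset_right hsub]
      simp
    · filter_upwards [ae_restrict_mem measurableSet_Ioi] with v hv
      exact (hD v (hz.trans hv)).le
  have hSd := hasDerivAt_integral_Ioi D (fun z hz => (hD' z hz).continuousAt) hDint
  have hkey : ∀ z > (0:ℝ), d2u t (cstar t (w t z)) * dc t z = -(D z) := fun z hz => by
    have h1 : HasDerivAt (fun z => du t (cstar t (w t z))) _ z :=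
      HasDerivAt.comp z (hd2u t ht _ (hcpos z hz)) (hdc t ht z hz)
    refine h1.unique ((hSd z hz).congr_of_eventuallyEq ?_)
    filter_upwards [lt_mem_nhds hz] with v hv
    exact hduid t ht v hv
  have hρ : ∀ z > (0:ℝ), -(d2u t (cstar t (w t z))) / du t (cstar t (w t z))
      = D z / (dc t z * ∫ ξ in Ioi z, D ξ) := fun z hz => by
    have h1 := hdcpos t ht z hz
    have h2 := hS z hz
    rw [hduid t ht z hz, div_eq_div_iff h2.ne' (by positivity)]
    linear_combination (-(∫ ξ in Ioi z, D ξ)) * hkey z hz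
  refine ⟨hρ x hx, ?_⟩
  have h1 := hdcpos t ht x hx
  have h2 := hS x hx
  have h3 := hD x hx
  have hL : HasDerivAt (fun z => -(d2u t (cstar t (w t z))) / du t (cstar t (w t z)))
      (drho t (cstar t (w t x)) * dc t x) x :=
    HasDerivAt.comp x (hdrho t ht _ (hcpos x hx)) (hdc t ht x hx)
  have hR := (hD' x hx).div ((hd2c t ht x hx).mul (hSd x hx)) (mul_pos h1 h2).ne'
  have heq := hL.unique (hR.congr_of_eventuallyEq (by
    filter_upwards [lt_mem_nhds hx] with z hz
    exact hρ z hz))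
  have hfin : drho t (cstar t (w t x)) = D x / (dc t x ^ 2 * ∫ ξ in Ioi x, D ξ) *
      (D' x / D x + D x / (∫ ξ in Ioi x, D ξ) - d2c t x / dc t x) := by
    rw [← mul_left_inj' h1.ne', heq]
    simp only [Pi.mul_apply]
    field_simp
    ring
  have hpos : 0 < D x / (dc t x ^ 2 * ∫ ξ in Ioi x, D ξ) := by positivity
  rw [hfin]
  rcases lt_trichotomy (D' x / D x + D x / (∫ ξ in Ioi x, D ξ) - d2c t x / dc t x) 0 with h | h | h
  · rw [Real.sign_of_neg h, Real.sign_of_neg (mul_neg_of_pos_of_neg hpos h)]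
  · rw [h, mul_zero]
  · rw [Real.sign_of_pos h, Real.sign_of_pos (mul_pos hpos h)]
end

section
/- Let c*(t,w) satisfy c*(t,0) = 0 with c*(t,·) locally Lipschitz and strictly increasing in w, let w(t,x) solve ∂_t w(t,x) = −c*(t,w(t,x)), w(0,x) = x, assume x ↦ c*(t,w(t,x)) is twice differentiable with strictly positive first derivative, let D : (0,∞) → (0,∞) be differentiable with ∫_x^∞ D(ξ) dξ < ∞ for all x > 0, and let u satisfy ∂_c u(t, c*(t,w(t,x))) = ∫_x^∞ D(ξ) dξ. Then the investor is DARA, i.e. ∂_c ρ(t,c) ≤ 0 for all t ≥ 0 and all c in the range of c*(t,w(t,·)), if and only if for every x > 0: D'(x)/D(x) + D(x)/∫_x^∞ D(ξ) dξ ≤ inf_{t ≥ 0} (∂²_x c*(t,w(t,x))) / (∂_x c*(t,w(t,x))). -/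
/-!
Fix `t ≥ 0`, put `C x = cstar t (w t x)` and `I x = ∫ ξ in Ioi x, D ξ`. Differentiating
`du t (C x) = I x` gives `d2u t (C x) = -D x / dc t x`, so the risk aversion along `C` is
`D / (dc * I)`, and differentiating this once more yields
`drho t (C x) * dc t x = D x / (dc t x * I x) * (D' x / D x + D x / I x - d2c t x / dc t x)`.
The factors `dc t x` and `D x / (dc t x * I x)` are positive, so the two inequalities are
equivalent pointwise in `(t, x)`.

These chain rules need `C x > 0`, i.e. `w t x > 0` (`wealth_pos`). As no regularity in time and no
sign of consumption at negative wealth is assumed, this does not follow from uniqueness for the ODE.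
It comes instead from the strict monotonicity of `C`: wealth paths from distinct positive initial
wealths never meet (`wealth_lt`), and their difference is nonincreasing in time, so `w t ·` is
`1`-Lipschitz (`wealth_continuousOn`). If the path from `x` first reached `0` at time `τ`, the path
from `x / 2` would be negative at time `τ`; but whenever that path is negative at a time `r ≤ τ`,
some intermediate initial wealth has wealth `0` at time `r`, so consumption from `x / 2` is negative
and the path is increasing at `r`. Hence it cannot attain a negative minimum on `[0, τ]`.
-/

open MeasureTheory Set

section Wealth

variable {cstar w dc : ℝ → ℝ → ℝ}

/-- Consumption is strictly increasing in the initial wealth. -/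
lemma cons_strictMonoOn
    (hdc : ∀ t ≥ (0:ℝ), ∀ x > (0:ℝ), HasDerivAt (fun z => cstar t (w t z)) (dc t x) x)
    (hdcpos : ∀ t ≥ (0:ℝ), ∀ x > (0:ℝ), 0 < dc t x) {t : ℝ} (ht : 0 ≤ t) :
    StrictMonoOn (fun z => cstar t (w t z)) (Ioi 0) := by
  apply strictMonoOn_of_deriv_pos (convex_Ioi 0)
  · exact fun x hx => (hdc t ht x hx).continuousAt.continuousWithinAt
  · intro x hx
    rw [interior_Ioi] at hx
    rw [(hdc t ht x hx).deriv]
    exact hdcpos t ht x hx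

lemma wealth_path_continuousOn
    (hwode : ∀ x ≥ (0:ℝ), ∀ t ≥ (0:ℝ),
      HasDerivAt (fun s => w s x) (-(cstar t (w t x))) t) {x : ℝ} (hx : 0 < x) :
    ContinuousOn (fun s => w s x) (Ici 0) :=
  fun t ht => (hwode x hx.le t ht).continuousAt.continuousWithinAt

/-- Paths that met at time `t` would have equal consumption there, contradicting strict
monotonicity; so the order of the initial wealths is kept at all times. -/
lemma wealth_lt
    (hw0 : ∀ x ≥ (0:ℝ), w 0 x = x)
    (hwode : ∀ x ≥ (0:ℝ), ∀ t ≥ (0:ℝ),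
      HasDerivAt (fun s => w s x) (-(cstar t (w t x))) t)
    (hmono : ∀ t ≥ (0:ℝ), StrictMonoOn (fun z => cstar t (w t z)) (Ioi 0))
    {t x y : ℝ} (ht : 0 ≤ t) (hx : 0 < x) (hxy : x < y) : w t x < w t y := by
  have hy : 0 < y := hx.trans hxy
  by_contra! h
  have hc : ContinuousOn (fun s => w s y - w s x) (Icc 0 t) :=
    ((wealth_path_continuousOn hwode hy).sub (wealth_path_continuousOn hwode hx)).mono
      Icc_subset_Ici_self
  have h0 : (0:ℝ) ∈ Icc (w t y - w t x) (w 0 y - w 0 x) := by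
    rw [hw0 x hx.le, hw0 y hy.le]
    constructor <;> linarith
  obtain ⟨s, hs, hs0⟩ := intermediate_value_Icc' ht hc h0
  have hlt := hmono s hs.1 hx hy hxy
  have heq : w s x = w s y := by simp only at hs0; linarith
  simp only [heq, lt_self_iff_false] at hlt

/-- Richer investors consume more, so gaps between paths shrink and `w t ·` is `1`-Lipschitz. -/
lemma wealth_continuousOn
    (hw0 : ∀ x ≥ (0:ℝ), w 0 x = x)
    (hwode : ∀ x ≥ (0:ℝ), ∀ t ≥ (0:ℝ),
      HasDerivAt (fun s => w s x) (-(cstar t (w t x))) t)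
    (hmono : ∀ t ≥ (0:ℝ), StrictMonoOn (fun z => cstar t (w t z)) (Ioi 0))
    {t : ℝ} (ht : 0 ≤ t) : ContinuousOn (w t) (Ioi 0) := by
  have key : ∀ x > (0:ℝ), ∀ y, x < y → w t y - w t x ≤ y - x := by
    intro x hx y hxy
    have hy : 0 < y := hx.trans hxy
    have hanti : AntitoneOn (fun s => w s y - w s x) (Ici 0) := by
      apply antitoneOn_of_hasDerivWithinAt_nonpos (convex_Ici 0)
        (f' := fun s => -(cstar s (w s y)) - -(cstar s (w s x)))
      · exact (wealth_path_continuousOn hwode hy).sub (wealth_path_continuousOn hwode hx)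
      · intro s hs
        rw [interior_Ici] at hs
        exact ((hwode y hy.le s hs.le).sub (hwode x hx.le s hs.le)).hasDerivWithinAt
      · intro s hs
        rw [interior_Ici] at hs
        have := hmono s hs.le hx hy hxy
        simp only at this
        linarith
    have := hanti (mem_Ici.2 le_rfl) (mem_Ici.2 ht) ht
    simpa only [hw0 x hx.le, hw0 y hy.le] using this
  have hlip : LipschitzOnWith 1 (w t) (Ioi 0) := by
    apply LipschitzOnWith.of_le_add
    intro x hx y hy
    rcases lt_trichotomy x y with h | h | h
    · have := wealth_lt hw0 hwode hmono ht hx h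
      have := dist_nonneg (x := x) (y := y)
      linarith
    · simp [h]
    · have := key y hy x h
      rw [Real.dist_eq, abs_of_pos (sub_pos.2 h)]
      linarith
  exact hlip.continuousOn

/-- Wealth stays positive: the first path to reach `0` would force the path from half its initial
wealth to have a negative minimum at a point of positive derivative. -/
lemma wealth_pos_s5
    (hc0 : ∀ t ≥ (0:ℝ), cstar t 0 = 0)
    (hw0 : ∀ x ≥ (0:ℝ), w 0 x = x)
    (hwode : ∀ x ≥ (0:ℝ), ∀ t ≥ (0:ℝ),
      HasDerivAt (fun s => w s x) (-(cstar t (w t x))) t)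
    (hmono : ∀ t ≥ (0:ℝ), StrictMonoOn (fun z => cstar t (w t z)) (Ioi 0))
    {t x : ℝ} (ht : 0 ≤ t) (hx : 0 < x) : 0 < w t x := by
  by_contra! hneg
  have hcx := wealth_path_continuousOn hwode hx
  -- `τ` is the first time at which the path from `x` vanishes.
  obtain ⟨τ, ⟨hτ, hτ0⟩, hτpos⟩ :
      ∃ τ, (0 ≤ τ ∧ w τ x = 0) ∧ ∀ s, 0 ≤ s → s ≤ τ → 0 ≤ w s x := by
    have hne : (Icc 0 t ∩ (fun s => w s x) ⁻¹' {0}).Nonempty := by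
      have h0 : (0:ℝ) ∈ Icc (w t x) (w 0 x) := ⟨hneg, by rw [hw0 x hx.le]; exact hx.le⟩
      obtain ⟨s, hs, hs0⟩ := intermediate_value_Icc' ht (hcx.mono Icc_subset_Ici_self) h0
      exact ⟨s, hs, hs0⟩
    have hcomp : IsCompact (Icc 0 t ∩ (fun s => w s x) ⁻¹' {0}) :=
      isCompact_Icc.of_isClosed_subset
        ((hcx.mono Icc_subset_Ici_self).preimage_isClosed_of_isClosed isClosed_Icc
          isClosed_singleton) inter_subset_left
    obtain ⟨τ, ⟨hτ, hτ0⟩, hmin⟩ := hcomp.exists_isLeast hne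
    refine ⟨τ, ⟨hτ.1, hτ0⟩, fun s hs hsτ => ?_⟩
    by_contra! hs0
    obtain ⟨r, hr, hr0⟩ := intermediate_value_Icc' hs
      (hcx.mono Icc_subset_Ici_self) ⟨hs0.le, by rw [hw0 x hx.le]; exact hx.le⟩
    have : τ ≤ r := hmin ⟨⟨hr.1, hr.2.trans (hsτ.trans hτ.2)⟩, hr0⟩
    have hsr : s = τ := le_antisymm hsτ (this.trans hr.2)
    rw [hsr, show w τ x = 0 from hτ0] at hs0
    exact lt_irrefl _ hs0
  have hy : 0 < x / 2 := by linarith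
  have hyx : x / 2 < x := by linarith
  obtain ⟨r, hr, hrmin⟩ := isCompact_Icc.exists_isMinOn (nonempty_Icc.2 hτ)
    ((wealth_path_continuousOn hwode hy).mono Icc_subset_Ici_self : ContinuousOn _ (Icc 0 τ))
  have hrneg : w r (x / 2) < 0 := by
    have h1 := hrmin (right_mem_Icc.2 hτ)
    have h2 := wealth_lt hw0 hwode hmono hτ hy hyx
    simp only [mem_ofPred_eq] at h1
    linarith
  have hr0 : 0 < r := by
    rcases hr.1.lt_or_eq with h | h
    · exact h
    · rw [← h, hw0 _ hy.le] at hrneg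
      linarith
  -- Some initial wealth in `[x / 2, x]` has wealth `0`, hence zero consumption, at time `r`.
  obtain ⟨z, hz, hz0⟩ := intermediate_value_Icc hyx.le
    ((wealth_continuousOn hw0 hwode hmono hr.1).mono
      (fun z hz => hy.trans_le hz.1 : Icc (x / 2) x ⊆ Ioi 0))
    ⟨hrneg.le, hτpos r hr.1 hr.2⟩
  have hyz : x / 2 < z := by
    rcases hz.1.lt_or_eq with h | h
    · exact h
    · rw [h, hz0] at hrneg
      exact absurd hrneg (lt_irrefl _)
  have hcneg : cstar r (w r (x / 2)) < 0 := by
    have := hmono r hr.1 hy (hy.trans hyz) hyz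
    simpa only [hz0, hc0 r hr.1] using this
  -- A positive derivative at `r` gives smaller values just to the left of `r`.
  have hslope := (hasDerivAt_iff_tendsto_slope.1 (hwode _ hy.le r hr.1)).eventually
    (lt_mem_nhds (neg_pos.2 hcneg))
  have hsub : Iio r ⊆ {r}ᶜ := fun s hs => ne_of_lt hs
  have hleft := hslope.filter_mono (nhdsWithin_mono r hsub)
  obtain ⟨s, hs1, hs2⟩ := (hleft.and (Ioo_mem_nhdsLT hr0)).exists
  have h3 := hrmin ⟨hs2.1.le, hs2.2.le.trans hr.2⟩
  simp only [mem_ofPred_eq] at h3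
  rw [slope_def_field] at hs1
  exact hs1.not_ge (div_nonpos_of_nonneg_of_nonpos (sub_nonneg.2 h3) (sub_nonpos.2 hs2.2.le))

end Wealth

lemma hasDerivAt_tail {D : ℝ → ℝ} (hD : ContinuousOn D (Ioi 0))
    (hDint : ∀ x > (0:ℝ), IntegrableOn D (Ioi x)) {x : ℝ} (hx : 0 < x) :
    HasDerivAt (fun z => ∫ ξ in Ioi z, D ξ) (-D x) x := by
  have hx2 : 0 < x / 2 := by linarith
  have hloc : HasDerivAt (fun z => ∫ ξ in (x / 2)..z, D ξ) (D x) x := by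
    apply intervalIntegral.integral_hasDerivAt_right
    · rw [intervalIntegrable_iff_integrableOn_Ioc_of_le (by linarith)]
      exact (hDint _ hx2).mono_set Ioc_subset_Ioi_self
    · exact hD.stronglyMeasurableAtFilter isOpen_Ioi x hx
    · exact hD.continuousAt (Ioi_mem_nhds hx)
  refine (hloc.const_sub (∫ ξ in Ioi (x / 2), D ξ)).congr_of_eventuallyEq ?_
  filter_upwards [Ioi_mem_nhds (show x / 2 < x by linarith)] with z hz
  have := intervalIntegral.integral_Ioi_sub_Ioi (hDint _ hx2) (le_of_lt hz)
  linarith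

lemma tail_pos {D : ℝ → ℝ} (hD : ∀ x > (0:ℝ), 0 < D x)
    (hDint : ∀ x > (0:ℝ), IntegrableOn D (Ioi x)) {x : ℝ} (hx : 0 < x) :
    0 < ∫ ξ in Ioi x, D ξ := by
  rw [setIntegral_pos_iff_support_of_nonneg_ae _ (hDint x hx)]
  · have : Function.support D ∩ Ioi x = Ioi x :=
      inter_eq_right.2 fun y hy => (hD y (hx.trans hy)).ne'
    simp [this]
  · filter_upwards [ae_restrict_mem measurableSet_Ioi] with y hy
    exact (hD y (hx.trans hy)).le

theorem stmt_5
    (cstar : ℝ → ℝ → ℝ) (w : ℝ → ℝ → ℝ) (dc d2c : ℝ → ℝ → ℝ)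
    (D D' : ℝ → ℝ) (u du d2u drho : ℝ → ℝ → ℝ)
    (hc0 : ∀ t ≥ (0:ℝ), cstar t 0 = 0)
    (hclip : ∀ t ≥ (0:ℝ), LocallyLipschitz (cstar t))
    (hcmono : ∀ t ≥ (0:ℝ), StrictMonoOn (cstar t) (Ici 0))
    (hw0 : ∀ x ≥ (0:ℝ), w 0 x = x)
    (hwode : ∀ x ≥ (0:ℝ), ∀ t ≥ (0:ℝ),
      HasDerivAt (fun s => w s x) (-(cstar t (w t x))) t)
    (hdc : ∀ t ≥ (0:ℝ), ∀ x > (0:ℝ), HasDerivAt (fun z => cstar t (w t z)) (dc t x) x)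
    (hd2c : ∀ t ≥ (0:ℝ), ∀ x > (0:ℝ), HasDerivAt (dc t) (d2c t x) x)
    (hdcpos : ∀ t ≥ (0:ℝ), ∀ x > (0:ℝ), 0 < dc t x)
    (hD : ∀ x > (0:ℝ), 0 < D x)
    (hD' : ∀ x > (0:ℝ), HasDerivAt D (D' x) x)
    (hDint : ∀ x > (0:ℝ), IntegrableOn D (Ioi x))
    (hdu : ∀ t ≥ (0:ℝ), ∀ c > (0:ℝ), HasDerivAt (u t) (du t c) c)
    (hd2u : ∀ t ≥ (0:ℝ), ∀ c > (0:ℝ), HasDerivAt (du t) (d2u t c) c)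
    (hduid : ∀ t ≥ (0:ℝ), ∀ x > (0:ℝ),
      du t (cstar t (w t x)) = ∫ ξ in Ioi x, D ξ)
    (hdrho : ∀ t ≥ (0:ℝ), ∀ c > (0:ℝ),
      HasDerivAt (fun v => -(d2u t v) / du t v) (drho t c) c) :
    (∀ t ≥ (0:ℝ), ∀ x > (0:ℝ), drho t (cstar t (w t x)) ≤ 0) ↔
      (∀ x > (0:ℝ), ∀ t ≥ (0:ℝ),
        D' x / D x + D x / (∫ ξ in Ioi x, D ξ) ≤ d2c t x / dc t x) := by
  have hmono := fun t (ht : t ≥ (0:ℝ)) => cons_strictMonoOn hdc hdcpos ht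
  have hCpos : ∀ t ≥ (0:ℝ), ∀ x > (0:ℝ), 0 < cstar t (w t x) := by
    intro t ht x hx
    have hw := wealth_pos_s5 hc0 hw0 hwode hmono ht hx
    have := hcmono t ht (mem_Ici.2 le_rfl) (mem_Ici.2 hw.le) hw
    rwa [hc0 t ht] at this
  have hDc : ContinuousOn D (Ioi 0) :=
    fun x hx => (hD' x hx).continuousAt.continuousWithinAt
  have key : ∀ t ≥ (0:ℝ), ∀ x > (0:ℝ), (drho t (cstar t (w t x)) ≤ 0 ↔
      D' x / D x + D x / (∫ ξ in Ioi x, D ξ) ≤ d2c t x / dc t x) := by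
    intro t ht x hx
    -- First differentiation of the defining identity for the marginal utility.
    have h2 : ∀ y > (0:ℝ), d2u t (cstar t (w t y)) = -D y / dc t y := by
      intro y hy
      have e1 := (hd2u t ht _ (hCpos t ht y hy)).comp y (hdc t ht y hy)
      have e2 : HasDerivAt (du t ∘ fun z => cstar t (w t z)) (-D y) y := by
        refine (hasDerivAt_tail hDc hDint hy).congr_of_eventuallyEq ?_
        filter_upwards [Ioi_mem_nhds hy] with z hz
        exact hduid t ht z hz
      rw [eq_div_iff (hdcpos t ht y hy).ne']
      exact e1.unique e2
    have hI := tail_pos hD hDint hx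
    have hd := hdcpos t ht x hx
    have hDx := hD x hx
    have e1 := (hdrho t ht _ (hCpos t ht x hx)).comp x (hdc t ht x hx)
    -- Second differentiation, of the risk aversion along the consumption path.
    have e2 := (hD' x hx).fun_div ((hd2c t ht x hx).fun_mul (hasDerivAt_tail hDc hDint hx))
      (mul_pos hd hI).ne'
    have e3 := e2.congr_of_eventuallyEq
      (f₁ := (fun v => -(d2u t v) / du t v) ∘ fun z => cstar t (w t z)) (by
        filter_upwards [Ioi_mem_nhds hx] with z hz
        have := (hdcpos t ht z hz).ne'
        have := (tail_pos hD hDint hz).ne'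
        simp only [Function.comp_apply]
        rw [h2 z hz, hduid t ht z hz]
        field_simp)
    have e4 := e1.unique e3
    set J := ∫ ξ in Ioi x, D ξ
    have e5 : drho t (cstar t (w t x)) =
        D x / (dc t x * dc t x * J) * (D' x / D x + D x / J - d2c t x / dc t x) := by
      rw [← eq_div_iff hd.ne'] at e4
      rw [e4]
      field_simp
      ring
    have hK : 0 < D x / (dc t x * dc t x * J) := by positivity
    rw [e5]
    constructor
    · intro h
      by_contra! hlt
      exact h.not_gt (mul_pos hK (sub_pos.2 hlt))
    · intro h
      exact mul_nonpos_of_nonneg_of_nonpos hK.le (sub_nonpos.2 h)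
  exact ⟨fun h x hx t ht => (key t ht x hx).1 (h t ht x hx),
    fun h t ht x hx => (key t ht x hx).2 (h x hx t ht)⟩
end

section
/- Let σ > 0 and r ∈ ℝ, and let π, c : (0,∞) × (0,∞) → ℝ with π(t,w) > 0 for all t, w > 0, π continuously differentiable in t and twice continuously differentiable in w (all partials jointly continuous), and c continuously differentiable in w. Then the following are equivalent: (i) Black's PDE holds on (0,∞)²: ∂_t π = −(σ²/2) π² ∂²_w π + (c − rw) ∂_w π − π ∂_w c + r π; (ii) for each t > 0 the function w ↦ ∫_1^w ∂_t π(t,ξ)/π(t,ξ)² dξ + (σ²/2) ∂_w π(t,w) + c(t,w)/π(t,w) − r w/π(t,w) is constant in w, i.e. equals some function β(t) of t alone. -/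
open MeasureTheory Set

/-!
For fixed `t`, let `G w` be the left-hand side of the integrated identity. By the fundamental
theorem of calculus and the quotient rule, `p² · G'` is exactly the difference of the two sides of
Black's PDE. As `p > 0`, the PDE at `(t, w)` says `G' w = 0`, and on the interval `(0, ∞)` a
function is constant if and only if its derivative vanishes.
-/

/-- The derivative of the integrated Black expression at a fixed time, with `P, C` the strategies
as functions of wealth and `F` the time derivative of `P`. -/
lemma hasDerivAt_integrated (σ r : ℝ) {P C F P' P'' C' : ℝ → ℝ}
    (hpos : ∀ w > (0:ℝ), 0 < P w)
    (hP : ∀ w > (0:ℝ), HasDerivAt P (P' w) w)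
    (hP' : ∀ w > (0:ℝ), HasDerivAt P' (P'' w) w)
    (hC : ∀ w > (0:ℝ), HasDerivAt C (C' w) w)
    (hF : ContinuousOn F (Ioi 0)) {w : ℝ} (hw : 0 < w) :
    HasDerivAt (fun w => (∫ ξ in (1:ℝ)..w, F ξ / (P ξ) ^ 2) + (σ ^ 2 / 2) * P' w
          + C w / P w - r * w / P w)
      ((F w - (-(σ ^ 2 / 2) * (P w) ^ 2 * P'' w + (C w - r * w) * P' w
          - P w * C' w + r * P w)) / (P w) ^ 2) w := by
  have hq : ContinuousOn (fun ξ => F ξ / (P ξ) ^ 2) (Ioi 0) :=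
    hF.div (ContinuousOn.pow (fun x hx => (hP x hx).continuousAt.continuousWithinAt) 2)
      fun x hx => pow_ne_zero 2 (hpos x hx).ne'
  have hsub : uIcc 1 w ⊆ Ioi (0:ℝ) := fun x hx =>
    lt_of_lt_of_le (lt_min one_pos hw) hx.1
  have hI : HasDerivAt (fun w => ∫ ξ in (1:ℝ)..w, F ξ / (P ξ) ^ 2) (F w / (P w) ^ 2) w :=
    intervalIntegral.integral_hasDerivAt_right (hq.mono hsub).intervalIntegrable
      (hq.stronglyMeasurableAtFilter isOpen_Ioi w hw) (hq.continuousAt (Ioi_mem_nhds hw))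
  have hne := (hpos w hw).ne'
  have h := ((hI.add ((hP' w hw).const_mul (σ ^ 2 / 2))).add ((hC w hw).div (hP w hw) hne)).sub
    (((hasDerivAt_id w).const_mul r).div (hP w hw) hne)
  refine h.congr_deriv ?_
  simp only [id]
  field_simp
  ring

theorem stmt_13 (σ r : ℝ) (hσ : 0 < σ)
    (p c pt pw pww cw : ℝ → ℝ → ℝ)
    (hppos : ∀ t > (0:ℝ), ∀ w > (0:ℝ), 0 < p t w)
    (hpt : ∀ t > (0:ℝ), ∀ w > (0:ℝ), HasDerivAt (fun s => p s w) (pt t w) t)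
    (hpw : ∀ t > (0:ℝ), ∀ w > (0:ℝ), HasDerivAt (p t) (pw t w) w)
    (hpww : ∀ t > (0:ℝ), ∀ w > (0:ℝ), HasDerivAt (pw t) (pww t w) w)
    (hcw : ∀ t > (0:ℝ), ∀ w > (0:ℝ), HasDerivAt (c t) (cw t w) w)
    (hpc : ContinuousOn (Function.uncurry p) (Ioi 0 ×ˢ Ioi 0))
    (hcc : ContinuousOn (Function.uncurry c) (Ioi 0 ×ˢ Ioi 0))
    (hptc : ContinuousOn (Function.uncurry pt) (Ioi 0 ×ˢ Ioi 0))
    (hpwc : ContinuousOn (Function.uncurry pw) (Ioi 0 ×ˢ Ioi 0))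
    (hpwwc : ContinuousOn (Function.uncurry pww) (Ioi 0 ×ˢ Ioi 0))
    (hcwc : ContinuousOn (Function.uncurry cw) (Ioi 0 ×ˢ Ioi 0)) :
    -- (i) Black's PDE
    (∀ t > (0:ℝ), ∀ w > (0:ℝ),
        pt t w = -(σ ^ 2 / 2) * (p t w) ^ 2 * pww t w + (c t w - r * w) * pw t w
          - p t w * cw t w + r * p t w)
    ↔
    -- (ii) the integrated expression is constant in w
    (∀ t > (0:ℝ), ∃ β : ℝ, ∀ w > (0:ℝ),
        (∫ ξ in (1:ℝ)..w, pt t ξ / (p t ξ) ^ 2) + (σ ^ 2 / 2) * pw t w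
          + c t w / p t w - r * w / p t w = β) := by
  have hG (t : ℝ) (ht : 0 < t) (w : ℝ) (hw : 0 < w) :=
    hasDerivAt_integrated σ r (hppos t ht) (hpw t ht) (hpww t ht) (hcw t ht)
      (hptc.comp (f := fun w => (t, w)) (by fun_prop) fun x hx => ⟨ht, hx⟩) hw
  constructor
  · intro h t ht
    exact ⟨_, fun w hw => isOpen_Ioi.is_const_of_deriv_eq_zero isPreconnected_Ioi
        (fun x hx => (hG t ht x hx).differentiableAt.differentiableWithinAt)
        (fun x hx => by
          refine (hG t ht x hx).deriv.trans ?_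
          exact div_eq_zero_iff.2 (Or.inl (sub_eq_zero.2 (h t ht x hx))))
        hw (mem_Ioi.2 one_pos)⟩
  · intro h t ht w hw
    obtain ⟨β, hβ⟩ := h t ht
    have h0 := (hG t ht w hw).unique ((hasDerivAt_const w β).congr_of_eventuallyEq
      (Filter.eventuallyEq_of_mem (Ioi_mem_nhds hw) hβ))
    exact sub_eq_zero.1
      ((div_eq_zero_iff.1 h0).resolve_right (pow_ne_zero 2 (hppos t ht w hw).ne'))
end

section
/- Let θ, σ > 0. For each t ≥ 0 let c(t,·) : [0,∞) → [0,∞) be twice continuously differentiable, strictly increasing with c(t,0) = 0 and ∂_w c(t,w) > 0, let Y(t,·) be its inverse in w, let π(t,w) > 0 for w > 0 be differentiable in w, let A(t) ∈ ℝ, and let u satisfy ∂_c u(t,c) = e^{A(t)} exp( −(θ/σ) ∫_1^{Y(t,c)} dξ/π(t,ξ) ). Then the absolute risk aversion ρ(t,c) = −∂²_c u(t,c)/∂_c u(t,c) equals (θ/σ) ∂_c Y(t,c) / π(t,Y(t,c)), and ρ(t,·) is nonincreasing for every t (DARA) if and only if ∂_w π(t,w)/π(t,w) ≥ − ∂²_w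 c(t,w)/∂_w c(t,w) for all t ≥ 0 and w > 0. In particular, if c(t,·) is convex in w and π(t,·) is increasing in w, the investor is DARA. -/
/-!
Write `g = c_w · π` for the product of marginal consumption and investment, as a function of wealth.
Since `∂_c u` is the exponential of a primitive of `-(θ/σ)/π` composed with `Y`, logarithmic
differentiation gives `ρ = (θ/σ) Y' / π(Y)`, and `Y' = 1 / c_w(Y)` by the inverse function rule, so
`ρ ∘ c = (θ/σ) / g` on positive wealth. As `c` and `Y` are mutually inverse increasing bijections of
`(0, ∞)`, DARA says exactly that `g` is nondecreasing, that is
`g' = c_ww π + c_w π_w ≥ 0`, which is the stated inequality after division by `c_w π > 0`. Under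
convexity of `c` and monotonicity of `π`, `g` is a product of nonnegative nondecreasing functions.
-/

open MeasureTheory Set

/-- Monotonicity of a product of positive functions, in logarithmic-derivative form. -/
lemma monotoneOn_mul_iff {f f' p p' : ℝ → ℝ}
    (hf : ∀ w > (0:ℝ), HasDerivAt f (f' w) w) (hp : ∀ w > (0:ℝ), HasDerivAt p (p' w) w)
    (hfpos : ∀ w > (0:ℝ), 0 < f w) (hppos : ∀ w > (0:ℝ), 0 < p w) :
    MonotoneOn (fun w => f w * p w) (Ioi 0) ↔
      ∀ w > (0:ℝ), p' w / p w ≥ -(f' w) / f w := by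
  have hg : ∀ w > (0:ℝ), HasDerivAt (fun w => f w * p w) (f' w * p w + f w * p' w) w :=
    fun w hw => (hf w hw).mul (hp w hw)
  have key : ∀ w > (0:ℝ), (p' w / p w ≥ -(f' w) / f w ↔ 0 ≤ f' w * p w + f w * p' w) := by
    intro w hw
    rw [ge_iff_le, div_le_div_iff₀ (hfpos w hw) (hppos w hw)]
    constructor <;> intro h <;> linarith
  constructor
  · intro h w hw
    rw [key w hw, ← (hg w hw).hasDerivWithinAt.derivWithin (isOpen_Ioi.uniqueDiffWithinAt hw)]
    exact h.derivWithin_nonneg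
  · intro h
    refine monotoneOn_of_deriv_nonneg (convex_Ioi 0)
      (fun w hw => (hg w hw).continuousAt.continuousWithinAt)
      (fun w hw => (hg w (interior_subset hw)).differentiableAt.differentiableWithinAt) ?_
    intro w hw
    have hw' : 0 < w := interior_subset hw
    rw [(hg w hw').deriv]
    exact (key w hw').1 (h w hw')

/-- Logarithmic derivative of `a * exp (b * ∫_1^{Y v} 1/p)`. -/
lemma hasDerivAt_exp_integral {p Y : ℝ → ℝ} {a b y' v : ℝ}
    (hp : ContinuousOn p (Ioi 0)) (hppos : ∀ w > (0:ℝ), 0 < p w)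
    (hYpos : 0 < Y v) (hY : HasDerivAt Y y' v) :
    HasDerivAt (fun v => a * Real.exp (b * ∫ ξ in (1:ℝ)..(Y v), 1 / p ξ))
      (a * Real.exp (b * ∫ ξ in (1:ℝ)..(Y v), 1 / p ξ) * (b * y' / p (Y v))) v := by
  have hcont : ContinuousOn (fun ξ => 1 / p ξ) (Ioi 0) :=
    continuousOn_const.div hp fun w hw => (hppos w hw).ne'
  have hsub : uIcc 1 (Y v) ⊆ Ioi 0 := fun x hx => lt_of_lt_of_le (lt_min one_pos hYpos) hx.1
  have hI : HasDerivAt (fun y => ∫ ξ in (1:ℝ)..y, 1 / p ξ) (1 / p (Y v)) (Y v) :=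
    intervalIntegral.integral_hasDerivAt_right (hcont.mono hsub).intervalIntegrable
      (hcont.stronglyMeasurableAtFilter isOpen_Ioi _ hYpos)
      (hcont.continuousAt (Ioi_mem_nhds hYpos))
  have h := (((hI.comp v hY).const_mul b).exp).const_mul a
  refine h.congr_deriv ?_
  simp only [Function.comp_apply]
  ring

theorem stmt_17 (θ σ : ℝ) (hθ : 0 < θ) (hσ : 0 < σ)
    (c cw cww : ℝ → ℝ → ℝ) (Y dY : ℝ → ℝ → ℝ) (p pw : ℝ → ℝ → ℝ)
    (A : ℝ → ℝ) (u du d2u : ℝ → ℝ → ℝ)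
    (hc0 : ∀ t ≥ (0:ℝ), c t 0 = 0)
    (hcnn : ∀ t ≥ (0:ℝ), ∀ w ≥ (0:ℝ), 0 ≤ c t w)
    (hcmono : ∀ t ≥ (0:ℝ), StrictMonoOn (c t) (Ici 0))
    (hcw : ∀ t ≥ (0:ℝ), ∀ w ≥ (0:ℝ), HasDerivAt (c t) (cw t w) w)
    (hcww : ∀ t ≥ (0:ℝ), ∀ w ≥ (0:ℝ), HasDerivAt (cw t) (cww t w) w)
    (hcwwc : ∀ t ≥ (0:ℝ), ContinuousOn (cww t) (Ici 0))
    (hcwpos : ∀ t ≥ (0:ℝ), ∀ w ≥ (0:ℝ), 0 < cw t w)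
    (hY : ∀ t ≥ (0:ℝ), ∀ w ≥ (0:ℝ), Y t (c t w) = w)
    (hY2 : ∀ t ≥ (0:ℝ), ∀ v > (0:ℝ), 0 < Y t v ∧ c t (Y t v) = v)
    (hdY : ∀ t ≥ (0:ℝ), ∀ v > (0:ℝ), HasDerivAt (Y t) (dY t v) v)
    (hppos : ∀ t ≥ (0:ℝ), ∀ w > (0:ℝ), 0 < p t w)
    (hpw : ∀ t ≥ (0:ℝ), ∀ w > (0:ℝ), HasDerivAt (p t) (pw t w) w)
    (hdu : ∀ t ≥ (0:ℝ), ∀ v > (0:ℝ), HasDerivAt (u t) (du t v) v)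
    (hd2u : ∀ t ≥ (0:ℝ), ∀ v > (0:ℝ), HasDerivAt (du t) (d2u t v) v)
    (hduF : ∀ t ≥ (0:ℝ), ∀ v > (0:ℝ),
      du t v = Real.exp (A t) *
        Real.exp (-(θ / σ) * ∫ ξ in (1:ℝ)..(Y t v), 1 / p t ξ)) :
    -- ρ(t,c) = (θ/σ) ∂_c Y(t,c) / π(t, Y(t,c))
    (∀ t ≥ (0:ℝ), ∀ v > (0:ℝ),
      -(d2u t v) / du t v = (θ / σ) * dY t v / p t (Y t v)) ∧
    -- DARA iff π_w/π ≥ -c_ww/c_w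
    ((∀ t ≥ (0:ℝ), AntitoneOn (fun v => -(d2u t v) / du t v) (Ioi 0)) ↔
      (∀ t ≥ (0:ℝ), ∀ w > (0:ℝ), pw t w / p t w ≥ -(cww t w) / cw t w)) ∧
    -- convex consumption and increasing investment imply DARA
    ((∀ t ≥ (0:ℝ), ConvexOn ℝ (Ici 0) (c t)) →
      (∀ t ≥ (0:ℝ), MonotoneOn (p t) (Ioi 0)) →
      ∀ t ≥ (0:ℝ), AntitoneOn (fun v => -(d2u t v) / du t v) (Ioi 0)) := by
  have hcpos : ∀ t ≥ (0:ℝ), ∀ w > (0:ℝ), 0 < c t w := fun t ht w hw => by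
    have := hcmono t ht self_mem_Ici hw.le hw
    rwa [hc0 t ht] at this
  have hrho : ∀ t ≥ (0:ℝ), ∀ v > (0:ℝ),
      -(d2u t v) / du t v = (θ / σ) * dY t v / p t (Y t v) := by
    intro t ht v hv
    have h1 := hasDerivAt_exp_integral (a := Real.exp (A t)) (b := -(θ / σ))
      (fun w hw => (hpw t ht w hw).continuousAt.continuousWithinAt) (hppos t ht)
      (hY2 t ht v hv).1 (hdY t ht v hv)
    rw [← hduF t ht v hv] at h1
    have h2 : d2u t v = du t v * (-(θ / σ) * dY t v / p t (Y t v)) :=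
      (hd2u t ht v hv).unique (h1.congr_of_eventuallyEq
        (Filter.eventuallyEq_of_mem (Ioi_mem_nhds hv) fun x hx => hduF t ht x hx))
    have hdu_ne : du t v ≠ 0 := by
      rw [hduF t ht v hv]
      positivity
    rw [h2, neg_div, mul_div_cancel_left₀ _ hdu_ne]
    ring
  have hdY_eq : ∀ t ≥ (0:ℝ), ∀ v > (0:ℝ), dY t v = 1 / cw t (Y t v) := by
    intro t ht v hv
    obtain ⟨hpos, heq⟩ := hY2 t ht v hv
    have h1 := (hcw t ht (Y t v) hpos.le).comp v (hdY t ht v hv)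
    have h2 : HasDerivAt (c t ∘ Y t) 1 v := (hasDerivAt_id v).congr_of_eventuallyEq
      (Filter.eventuallyEq_of_mem (Ioi_mem_nhds hv) fun x hx => (hY2 t ht x hx).2)
    rw [eq_div_iff (hcwpos t ht _ hpos.le).ne', mul_comm]
    exact h1.unique h2
  have hrho' : ∀ t ≥ (0:ℝ), ∀ v > (0:ℝ),
      -(d2u t v) / du t v = (θ / σ) / (cw t (Y t v) * p t (Y t v)) := by
    intro t ht v hv
    rw [hrho t ht v hv, hdY_eq t ht v hv, mul_one_div, div_div]
  have hgpos : ∀ t ≥ (0:ℝ), ∀ w > (0:ℝ), 0 < cw t w * p t w := fun t ht w hw =>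
    mul_pos (hcwpos t ht w hw.le) (hppos t ht w hw)
  have hθσ : 0 < θ / σ := div_pos hθ hσ
  have hanti : ∀ t ≥ (0:ℝ), (AntitoneOn (fun v => -(d2u t v) / du t v) (Ioi 0) ↔
      MonotoneOn (fun w => cw t w * p t w) (Ioi 0)) := by
    intro t ht
    constructor
    · intro h w₁ hw₁ w₂ hw₂ hle
      have h3 := h (hcpos t ht w₁ hw₁) (hcpos t ht w₂ hw₂)
        ((hcmono t ht).monotoneOn (Ioi_subset_Ici_self hw₁) (Ioi_subset_Ici_self hw₂) hle)
      simp only [hrho' t ht _ (hcpos t ht w₁ hw₁), hrho' t ht _ (hcpos t ht w₂ hw₂),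
        hY t ht w₁ (Ioi_subset_Ici_self hw₁), hY t ht w₂ (Ioi_subset_Ici_self hw₂)] at h3
      exact (div_le_div_iff_of_pos_left hθσ (hgpos t ht w₂ hw₂) (hgpos t ht w₁ hw₁)).1 h3
    · intro h v₁ hv₁ v₂ hv₂ hle
      obtain ⟨hp₁, he₁⟩ := hY2 t ht v₁ hv₁
      obtain ⟨hp₂, he₂⟩ := hY2 t ht v₂ hv₂
      have hYle : Y t v₁ ≤ Y t v₂ := by
        rw [← (hcmono t ht).le_iff_le hp₁.le hp₂.le, he₁, he₂]
        exact hle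
      simp only [hrho' t ht _ hv₁, hrho' t ht _ hv₂]
      exact div_le_div_of_nonneg_left hθσ.le (hgpos t ht _ hp₁) (h hp₁ hp₂ hYle)
  refine ⟨hrho, ?_, ?_⟩
  · refine forall₂_congr fun t ht => (hanti t ht).trans ?_
    exact monotoneOn_mul_iff (fun w hw => hcww t ht w hw.le) (hpw t ht)
      (fun w hw => hcwpos t ht w hw.le) (hppos t ht)
  · intro hconv hpmono t ht
    rw [hanti t ht]
    have hcwmono : MonotoneOn (cw t) (Ici 0) := by
      intro w₁ hw₁ w₂ hw₂ hle
      have h := (hconv t ht).monotoneOn_deriv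
        (fun w hw => (hcw t ht w hw).differentiableAt) hw₁ hw₂ hle
      rwa [(hcw t ht w₁ hw₁).deriv, (hcw t ht w₂ hw₂).deriv] at h
    intro w₁ hw₁ w₂ hw₂ hle
    exact mul_le_mul (hcwmono (Ioi_subset_Ici_self hw₁) (Ioi_subset_Ici_self hw₂) hle) (hpmono t ht hw₁ hw₂ hle)
      (hppos t ht w₁ hw₁).le (hcwpos t ht w₂ (Ioi_subset_Ici_self hw₂)).le
end

section
/- Let θ, σ > 0. For each t ≥ 0 let c(t,·) : [0,∞) → [0,∞) be twice continuously differentiable, strictly increasing with c(t,0) = 0 and ∂_w c(t,w) > 0, let Y(t,·) be its inverse in w, let π(t,w) > 0 for w > 0 be differentiable in w, let A(t) ∈ ℝ, and let u satisfy ∂_c u(t,c) = e^{A(t)} exp( −(θ/σ) ∫_1^{Y(t,c)} dξ/π(t,ξ) ). Then the relative risk aversion c·ρ(t,c), where ρ(t,c) = −∂²_c u(t,c)/∂_c u(t,c), is nonincreasing in c for every t (DRRA) if and only if (∂_w c(t,w))² − c(t,w) ∂²_w c(t,w) ≤ ∂_w c(t,w) · c(t,w) · ∂_w π(t,w)/π(t,w)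 for all t ≥ 0 and w > 0; equivalently, ∂_w[ log( c(t,w)/∂_w c(t,w) ) ] ≤ ∂_w log π(t,w). -/
/-!
Fix `t` and put `κ = θ / σ`, `g w = c w / (π w * c' w)`. Differentiating
`∂_c u = e^A exp (-κ ∫_1^Y 1 / π)` by the fundamental theorem of calculus, and using
`Y' v = 1 / c' (Y v)`, gives `v * ρ v = κ * g (Y v)` (`relRisk_eq`). Since `c` is an increasing
bijection of `(0, ∞)` with inverse `Y`, the left side is nonincreasing in `v` iff `g` is
nonincreasing in `w`, that is, iff `g' ≤ 0` (`antitoneOn_Ioi_iff`). The numerator of `g'` is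
`π (c'² - c c'') - c c' π'`, so this is the claimed inequality; dividing the latter by
`c * c'` yields the logarithmic form.
-/

open MeasureTheory Set

lemma antitoneOn_Ioi_iff {g g' : ℝ → ℝ} (hg : ∀ w > (0 : ℝ), HasDerivAt g (g' w) w) :
    AntitoneOn g (Ioi 0) ↔ ∀ w > (0 : ℝ), g' w ≤ 0 := by
  constructor
  · intro h w hw
    have h1 := h.derivWithin_nonpos (x := w)
    rwa [derivWithin_of_isOpen isOpen_Ioi hw, (hg w hw).deriv] at h1
  · intro h
    refine antitoneOn_of_deriv_nonpos (convex_Ioi 0)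
      (fun w hw => (hg w hw).continuousAt.continuousWithinAt) ?_ ?_
    · intro w hw
      rw [interior_Ioi] at hw
      exact (hg w hw).differentiableAt.differentiableWithinAt
    · intro w hw
      rw [interior_Ioi] at hw
      rw [(hg w hw).deriv]
      exact h w hw

/-- The relative risk aversion at consumption `v`, expressed through the wealth `Y v`. -/
lemma relRisk_eq {κ a v : ℝ} {c cw Y dY p du d2u : ℝ → ℝ} (hv : 0 < v)
    (hcw : ∀ w ≥ (0 : ℝ), HasDerivAt c (cw w) w)
    (hcwpos : ∀ w ≥ (0 : ℝ), 0 < cw w)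
    (hY2 : ∀ v > (0 : ℝ), 0 < Y v ∧ c (Y v) = v)
    (hdY : ∀ v > (0 : ℝ), HasDerivAt Y (dY v) v)
    (hppos : ∀ w > (0 : ℝ), 0 < p w)
    (hp : ContinuousOn p (Ioi 0))
    (hd2u : ∀ v > (0 : ℝ), HasDerivAt du (d2u v) v)
    (hduF : ∀ v > (0 : ℝ),
      du v = Real.exp a * Real.exp (-κ * ∫ ξ in (1 : ℝ)..(Y v), 1 / p ξ)) :
    v * (-(d2u v) / du v) = κ * (c (Y v) / (p (Y v) * cw (Y v))) := by
  obtain ⟨hYpos, hcY⟩ := hY2 v hv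
  have hpY := hppos _ hYpos
  have hcwY := hcwpos _ hYpos.le
  have hinv : dY v * cw (Y v) = 1 := by
    have h1 : HasDerivAt (c ∘ Y) (cw (Y v) * dY v) v :=
      (hcw _ hYpos.le).comp v (hdY v hv)
    have h2 : HasDerivAt (c ∘ Y) 1 v :=
      (hasDerivAt_id v).congr_of_eventuallyEq
        (Filter.eventuallyEq_of_mem (Ioi_mem_nhds hv) fun x hx => (hY2 x hx).2)
    rw [mul_comm]
    exact h1.unique h2
  have hcont : ContinuousOn (fun ξ => 1 / p ξ) (Ioi 0) :=
    continuousOn_const.div hp fun ξ hξ => (hppos ξ hξ).ne'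
  have hint : HasDerivAt (fun x => ∫ ξ in (1 : ℝ)..x, 1 / p ξ) (1 / p (Y v)) (Y v) := by
    refine intervalIntegral.integral_hasDerivAt_right ?_ ?_ ?_
    · refine (hcont.mono fun x hx => ?_).intervalIntegrable
      exact lt_of_lt_of_le (lt_min one_pos hYpos) hx.1
    · exact hcont.stronglyMeasurableAtFilter isOpen_Ioi _ hYpos
    · exact hcont.continuousAt (Ioi_mem_nhds hYpos)
  have hdu : HasDerivAt du (du v * (-κ * (1 / p (Y v) * dY v))) v := by
    have h1 := (((hint.comp v (hdY v hv)).const_mul (-κ)).exp).const_mul (Real.exp a)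
    rw [hduF v hv, mul_assoc]
    exact h1.congr_of_eventuallyEq
      (Filter.eventuallyEq_of_mem (Ioi_mem_nhds hv) fun x hx => hduF x hx)
  have hdupos : 0 < du v := by rw [hduF v hv]; positivity
  rw [(hd2u v hv).unique hdu, hcY, eq_one_div_of_mul_eq_one_left hinv]
  field_simp

theorem stmt_18 (θ σ : ℝ) (hθ : 0 < θ) (hσ : 0 < σ)
    (c cw cww : ℝ → ℝ → ℝ) (Y dY : ℝ → ℝ → ℝ) (p pw : ℝ → ℝ → ℝ)
    (A : ℝ → ℝ) (u du d2u : ℝ → ℝ → ℝ)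
    (hc0 : ∀ t ≥ (0:ℝ), c t 0 = 0)
    (hcnn : ∀ t ≥ (0:ℝ), ∀ w ≥ (0:ℝ), 0 ≤ c t w)
    (hcmono : ∀ t ≥ (0:ℝ), StrictMonoOn (c t) (Ici 0))
    (hcw : ∀ t ≥ (0:ℝ), ∀ w ≥ (0:ℝ), HasDerivAt (c t) (cw t w) w)
    (hcww : ∀ t ≥ (0:ℝ), ∀ w ≥ (0:ℝ), HasDerivAt (cw t) (cww t w) w)
    (hcwwc : ∀ t ≥ (0:ℝ), ContinuousOn (cww t) (Ici 0))
    (hcwpos : ∀ t ≥ (0:ℝ), ∀ w ≥ (0:ℝ), 0 < cw t w)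
    (hY : ∀ t ≥ (0:ℝ), ∀ w ≥ (0:ℝ), Y t (c t w) = w)
    (hY2 : ∀ t ≥ (0:ℝ), ∀ v > (0:ℝ), 0 < Y t v ∧ c t (Y t v) = v)
    (hdY : ∀ t ≥ (0:ℝ), ∀ v > (0:ℝ), HasDerivAt (Y t) (dY t v) v)
    (hppos : ∀ t ≥ (0:ℝ), ∀ w > (0:ℝ), 0 < p t w)
    (hpw : ∀ t ≥ (0:ℝ), ∀ w > (0:ℝ), HasDerivAt (p t) (pw t w) w)
    (hdu : ∀ t ≥ (0:ℝ), ∀ v > (0:ℝ), HasDerivAt (u t) (du t v) v)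
    (hd2u : ∀ t ≥ (0:ℝ), ∀ v > (0:ℝ), HasDerivAt (du t) (d2u t v) v)
    (hduF : ∀ t ≥ (0:ℝ), ∀ v > (0:ℝ),
      du t v = Real.exp (A t) *
        Real.exp (-(θ / σ) * ∫ ξ in (1:ℝ)..(Y t v), 1 / p t ξ)) :
    -- DRRA iff (c_w)² - c c_ww ≤ c_w c π_w / π
    ((∀ t ≥ (0:ℝ), AntitoneOn (fun v => v * (-(d2u t v) / du t v)) (Ioi 0)) ↔
      (∀ t ≥ (0:ℝ), ∀ w > (0:ℝ),
        (cw t w) ^ 2 - c t w * cww t w ≤ cw t w * c t w * pw t w / p t w)) ∧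
    -- the equivalent logarithmic-derivative formulation
    ((∀ t ≥ (0:ℝ), ∀ w > (0:ℝ),
        (cw t w) ^ 2 - c t w * cww t w ≤ cw t w * c t w * pw t w / p t w) ↔
      (∀ t ≥ (0:ℝ), ∀ w > (0:ℝ),
        cw t w / c t w - cww t w / cw t w ≤ pw t w / p t w)) := by
  have hcpos : ∀ t ≥ (0:ℝ), ∀ w > (0:ℝ), 0 < c t w := fun t ht w hw => by
    rw [← hc0 t ht]
    exact hcmono t ht self_mem_Ici hw.le hw
  refine ⟨forall₂_congr fun t ht => ?_, forall₂_congr fun t ht => forall₂_congr fun w hw => ?_⟩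
  · have hκ : 0 < θ / σ := div_pos hθ hσ
    have hrisk : ∀ v > (0:ℝ), v * (-(d2u t v) / du t v)
        = θ / σ * (c t (Y t v) / (p t (Y t v) * cw t (Y t v))) := fun v hv =>
      relRisk_eq hv (hcw t ht) (hcwpos t ht) (hY2 t ht) (hdY t ht) (hppos t ht)
        (fun w hw => (hpw t ht w hw).continuousAt.continuousWithinAt) (hd2u t ht) (hduF t ht)
    have hiff : AntitoneOn (fun v => v * (-(d2u t v) / du t v)) (Ioi 0) ↔
        AntitoneOn (fun w => c t w / (p t w * cw t w)) (Ioi 0) := by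
      constructor
      · intro h x hx y hy hxy
        have h1 := h (hcpos t ht x hx) (hcpos t ht y hy)
          ((hcmono t ht).monotoneOn (Ioi_subset_Ici_self hx) (Ioi_subset_Ici_self hy) hxy)
        simp only [hrisk _ (hcpos t ht x hx), hrisk _ (hcpos t ht y hy),
          hY t ht x (le_of_lt hx), hY t ht y (le_of_lt hy)] at h1
        exact le_of_mul_le_mul_left h1 hκ
      · intro h x hx y hy hxy
        obtain ⟨hYx, hcx⟩ := hY2 t ht x hx
        obtain ⟨hYy, hcy⟩ := hY2 t ht y hy
        have hle : Y t x ≤ Y t y := by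
          rwa [← (hcmono t ht).le_iff_le hYx.le hYy.le, hcx, hcy]
        simp only [hrisk x hx, hrisk y hy]
        exact mul_le_mul_of_nonneg_left (h hYx hYy hle) hκ.le
    rw [hiff]
    refine (antitoneOn_Ioi_iff fun w hw => (hcw t ht w (le_of_lt hw)).div
      ((hpw t ht w hw).mul (hcww t ht w (le_of_lt hw)))
      (mul_pos (hppos t ht w hw) (hcwpos t ht w (le_of_lt hw))).ne').trans ?_
    refine forall₂_congr fun w hw => ?_
    have hp := hppos t ht w hw
    have hd := hcwpos t ht w (le_of_lt hw)
    rw [Pi.mul_apply, div_le_iff₀ (by positivity), le_div_iff₀ hp, zero_mul]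
    constructor <;> intro h <;> linarith
  · have hp := hppos t ht w hw
    have hd := hcwpos t ht w (le_of_lt hw)
    have hc := hcpos t ht w hw
    have hl : cw t w / c t w - cww t w / cw t w
        = ((cw t w) ^ 2 - c t w * cww t w) / (cw t w * c t w) := by field_simp
    rw [hl, div_le_iff₀ (by positivity), div_mul_eq_mul_div, mul_comm (pw t w)]
end
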